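/- Suppose Q(u) ≥ 0 for every u ∈ C_c^∞(Ω), and let v be a positive supersolution of Q'(u) = 0 in Ω. If there exists a nonempty open set B with compact closure contained in Ω such that c_B = 0, then for every sequence u_k ∈ C_c^∞(Ω) with u_k ≥ 0, ∫_B u_k^p dx = 1 for all k, and Q(u_k) → 0, one has u_k → c v in L^p_loc(Ω) (i.e., ∫_K |u_k − c v|^p dx → 0 for every compact K ⊆ Ω), where c = (∫_B v^p dx)^{−1/p}. In particular Q admits a ground state. -/

import Mathlib

open MeasureTheory Filter
open scoped RealInnerProductSpace Topology

noncomputable section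

/-- Euclidean space `ℝ^d`. -/
abbrev Euc (d : ℕ) := EuclideanSpace ℝ (Fin d)

/-- A test function on `Ω`: smooth with compact support contained in `Ω`. -/
def IsTestFun {d : ℕ} (Ω : Set (Euc d)) (u : Euc d → ℝ) : Prop :=
  ContDiff ℝ (⊤ : ℕ∞) u ∧ HasCompactSupport u ∧ tsupport u ⊆ Ω

/-- The energy functional `Q(u) = ∫_Ω (|∇u|^p + V |u|^p) dx`. -/
def energyQ {d : ℕ} (Ω : Set (Euc d)) (V : Euc d → ℝ) (p : ℝ) (u : Euc d → ℝ) : ℝ :=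
  ∫ x in Ω, (‖gradient u x‖ ^ p + V x * |u x| ^ p)

/-- `V` is measurable and bounded on every compact subset of `Ω`. -/
def LocBddPotential {d : ℕ} (Ω : Set (Euc d)) (V : Euc d → ℝ) : Prop :=
  Measurable V ∧ ∀ K : Set (Euc d), K ⊆ Ω → IsCompact K → ∃ C : ℝ, ∀ x ∈ K, |V x| ≤ C

/-- A positive supersolution of `Q'(u) = 0` in `Ω`. -/
def IsPositiveSupersolution {d : ℕ} (Ω : Set (Euc d)) (V : Euc d → ℝ) (p : ℝ)
    (v : Euc d → ℝ) : Prop :=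
  ContDiffOn ℝ 1 v Ω ∧ (∀ x ∈ Ω, 0 < v x) ∧
    ∀ φ : Euc d → ℝ, IsTestFun Ω φ → (∀ x, 0 ≤ φ x) →
      0 ≤ ∫ x in Ω, (‖gradient v x‖ ^ (p - 2) * ⟪gradient v x, gradient φ x⟫
            + V x * v x ^ (p - 1) * φ x)

/-- A positive (weak) solution of `Q'(u) = 0` in `Ω`. -/
def IsPositiveSolution {d : ℕ} (Ω : Set (Euc d)) (V : Euc d → ℝ) (p : ℝ)
    (v : Euc d → ℝ) : Prop :=
  ContDiffOn ℝ 1 v Ω ∧ (∀ x ∈ Ω, 0 < v x) ∧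
    ∀ φ : Euc d → ℝ, IsTestFun Ω φ →
      (∫ x in Ω, (‖gradient v x‖ ^ (p - 2) * ⟪gradient v x, gradient φ x⟫
            + V x * v x ^ (p - 1) * φ x)) = 0

/-- A null sequence for the functional `Q`. -/
def IsNullSequence {d : ℕ} (Ω : Set (Euc d)) (V : Euc d → ℝ) (p : ℝ)
    (u : ℕ → Euc d → ℝ) : Prop :=
  (∀ k, IsTestFun Ω (u k)) ∧ (∀ k x, 0 ≤ u k x) ∧
    ∃ B : Set (Euc d), IsOpen B ∧ IsCompact (closure B) ∧ closure B ⊆ Ω ∧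
      (∀ k, (∫ x in B, u k x ^ p) = 1) ∧
      Tendsto (fun k => energyQ Ω V p (u k)) atTop (𝓝 0)

/-- A ground state of `Q`: a positive `C¹` function on `Ω` which is the limit in
`L^p_loc(Ω)` of a null sequence. -/
def IsGroundState {d : ℕ} (Ω : Set (Euc d)) (V : Euc d → ℝ) (p : ℝ)
    (v : Euc d → ℝ) : Prop :=
  ContDiffOn ℝ 1 v Ω ∧ (∀ x ∈ Ω, 0 < v x) ∧
    ∃ u : ℕ → Euc d → ℝ, IsNullSequence Ω V p u ∧
      ∀ K : Set (Euc d), K ⊆ Ω → IsCompact K →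
        Tendsto (fun k => ∫ x in K, |u k x - v x| ^ p) atTop (𝓝 0)

/-- `Q` has a weighted spectral gap (is strictly positive) in `Ω`. -/
def HasSpectralGap {d : ℕ} (Ω : Set (Euc d)) (V : Euc d → ℝ) (p : ℝ) : Prop :=
  ∃ W : Euc d → ℝ, ContinuousOn W Ω ∧ (∀ x ∈ Ω, 0 < W x) ∧
    ∀ u : Euc d → ℝ, IsTestFun Ω u → (∫ x in Ω, W x * |u x| ^ p) ≤ energyQ Ω V p u

/-- `c_B`: the infimum of `Q(u)` over test functions with `∫_B |u|^p = 1`. -/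
def cB {d : ℕ} (Ω B : Set (Euc d)) (V : Euc d → ℝ) (p : ℝ) : ℝ :=
  sInf { q : ℝ | ∃ u : Euc d → ℝ, IsTestFun Ω u ∧ (∫ x in B, |u x| ^ p) = 1 ∧
    q = energyQ Ω V p u }

/-- The Picone Lagrangian `L(u,v)`. -/
def piconeL {d : ℕ} (p : ℝ) (u v : Euc d → ℝ) (x : Euc d) : ℝ :=
  ‖gradient u x‖ ^ p + (p - 1) * (u x / v x) ^ p * ‖gradient v x‖ ^ p
    - p * (u x / v x) ^ (p - 1) *
        (‖gradient v x‖ ^ (p - 2) * ⟪gradient u x, gradient v x⟫)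

/-!
Substitute `u = w v`. As `v` is a supersolution, Picone's identity shows that the energy `Q(u)` of a
nonnegative test function dominates the integral of the nonnegative Lagrangian `L(u, v)`, which is
the Bregman remainder of `‖·‖ ^ p` between `w ∇v` and `∇u = w ∇v + v ∇w`. Uniform convexity bounds
`‖v ∇w‖ ^ p` by `δ ‖w ∇v‖ ^ p + C L(u, v)` for every `δ > 0`, so on a compact set `∫ ‖∇w‖ ^ p` is at
most `δ ∫ |w| ^ p + C Q(u)`. For a null sequence, the Poincaré inequality on small balls and
connectedness of `Ω` then propagate an `L ^ p` bound from `B` to every compact set, and afterwards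
show that `w_k` minus suitable constants tends to `0`; the normalization on `B` determines the
constants.
-/

section PBregman

variable {p : ℝ}

theorem rpow_sub_two_mul_self (hp : 1 < p) {s : ℝ} (hs : 0 ≤ s) :
    s ^ (p - 2) * s = s ^ (p - 1) := by
  rw [← Real.rpow_add_one' hs (by linarith)]
  ring_nf

theorem rpow_sub_one_mul_self (hp : 1 < p) {s : ℝ} (hs : 0 ≤ s) : s ^ (p - 1) * s = s ^ p := by
  rw [← Real.rpow_add_one' hs (by linarith)]
  ring_nf

theorem mul_rpow_sub_one_mul_lt (hp : 1 < p) {s t : ℝ} (hs : 0 ≤ s) (ht : 0 ≤ t) (hts : t ≠ s) :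
    p * (s ^ (p - 1) * t) < (p - 1) * s ^ p + t ^ p := by
  obtain rfl | hs := hs.eq_or_lt
  · rw [Real.zero_rpow (by linarith), Real.zero_rpow (by linarith)]
    linarith [Real.rpow_pos_of_pos (ht.lt_of_ne' hts) p]
  have hbernoulli : 1 + p * (t / s - 1) < (t / s) ^ p := by
    simpa only [add_sub_cancel] using one_add_mul_self_lt_rpow_one_add
      (by linarith [div_nonneg ht hs.le])
      (sub_ne_zero.2 fun h ↦ hts ((div_eq_one_iff_eq hs.ne').1 h)) hp
  rw [Real.div_rpow ht hs.le, lt_div_iff₀ (by positivity)] at hbernoulli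
  have hcancel : t / s * s ^ p = s ^ (p - 1) * t := by
    rw [← rpow_sub_one_mul_self hp hs.le]
    field_simp
  linear_combination hbernoulli - p * hcancel

theorem continuous_norm_rpow {E : Type*} [SeminormedAddCommGroup E] (hp : 0 ≤ p) :
    Continuous fun a : E ↦ ‖a‖ ^ p :=
  continuous_norm.rpow_const fun _ ↦ Or.inr hp

variable {E : Type*} [NormedAddCommGroup E] [InnerProductSpace ℝ E]

theorem norm_rpow_sub_two_mul_inner_le (hp : 1 < p) (a b : E) :
    ‖a‖ ^ (p - 2) * ⟪a, b⟫ ≤ ‖a‖ ^ (p - 1) * ‖b‖ := by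
  rw [← rpow_sub_two_mul_self hp (norm_nonneg a), mul_assoc]
  gcongr
  exact real_inner_le_norm a b

theorem abs_norm_rpow_sub_two_mul_inner_le (hp : 1 < p) (a b : E) :
    |‖a‖ ^ (p - 2) * ⟪a, b⟫| ≤ ‖a‖ ^ (p - 1) * ‖b‖ := by
  refine abs_le'.2 ⟨norm_rpow_sub_two_mul_inner_le hp a b, ?_⟩
  simpa using norm_rpow_sub_two_mul_inner_le hp a (-b)

/- The factor `‖a‖ ^ (p - 2)` is singular at `0` when `p < 2`; the product is continuous because
it is, up to the factor `p`, the derivative of the `C¹` function `‖·‖ ^ p`. -/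
theorem continuous_norm_rpow_sub_two_mul_inner (hp : 1 < p) :
    Continuous fun x : E × E ↦ ‖x.1‖ ^ (p - 2) * ⟪x.1, x.2⟫ := by
  have hfderiv : Continuous fun x : E × E ↦ fderiv ℝ (fun a : E ↦ ‖a‖ ^ p) x.1 x.2 :=
    (((contDiff_norm_rpow hp).continuous_fderiv one_ne_zero).comp continuous_fst).clm_apply
      continuous_snd
  convert hfderiv.const_mul p⁻¹ using 2 with x
  have hp0 : p ≠ 0 := by linarith
  rw [fderiv_norm_rpow _ hp]
  simp [mul_assoc, hp0]

/-- The Bregman divergence of `‖·‖ ^ p` between `a` and `b`, that is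
`‖a‖ ^ p - ‖b‖ ^ p - p * ‖b‖ ^ (p - 2) * ⟪b, a - b⟫`, written in the expanded form in which it
appears in the Picone Lagrangian. -/
def pBregman (p : ℝ) (a b : E) : ℝ :=
  ‖a‖ ^ p + (p - 1) * ‖b‖ ^ p - p * (‖b‖ ^ (p - 2) * ⟪b, a⟫)

theorem pBregman_pos (hp : 1 < p) {a b : E} (hab : a ≠ b) : 0 < pBregman p a b := by
  have hcs := norm_rpow_sub_two_mul_inner_le hp b a
  unfold pBregman
  by_cases hnorm : ‖a‖ = ‖b‖
  · have hb : 0 < ‖b‖ := by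
      refine (norm_nonneg b).lt_of_ne' fun hb ↦ hab ?_
      rw [norm_eq_zero.1 hb, norm_eq_zero.1 (hnorm.trans hb)]
    have hlt : ⟪b, a⟫ < ‖b‖ * ‖a‖ := by
      refine (real_inner_le_norm b a).lt_of_ne fun h ↦ hab ?_
      rw [inner_eq_norm_mul_iff_real, hnorm] at h
      exact (smul_right_injective E hb.ne' h).symm
    have hlt' : ‖b‖ ^ (p - 2) * ⟪b, a⟫ < ‖b‖ ^ p := by
      calc ‖b‖ ^ (p - 2) * ⟪b, a⟫ < ‖b‖ ^ (p - 2) * (‖b‖ * ‖a‖) := by gcongr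
        _ = ‖b‖ ^ p := by
          rw [hnorm, ← mul_assoc, rpow_sub_two_mul_self hp hb.le, rpow_sub_one_mul_self hp hb.le]
    rw [hnorm]
    nlinarith
  · nlinarith [mul_rpow_sub_one_mul_lt hp (norm_nonneg b) (norm_nonneg a) hnorm]

theorem pBregman_self (hp : 1 < p) (a : E) : pBregman p a a = 0 := by
  rw [pBregman, real_inner_self_eq_norm_mul_norm, ← mul_assoc (‖a‖ ^ (p - 2)),
    rpow_sub_two_mul_self hp (norm_nonneg a), rpow_sub_one_mul_self hp (norm_nonneg a)]
  ring

theorem pBregman_nonneg (hp : 1 < p) (a b : E) : 0 ≤ pBregman p a b := by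
  obtain rfl | hab := eq_or_ne a b
  · exact (pBregman_self hp a).ge
  · exact (pBregman_pos hp hab).le

theorem continuous_pBregman (hp : 1 < p) : Continuous fun x : E × E ↦ pBregman p x.1 x.2 := by
  have hpow := continuous_norm_rpow (E := E) (zero_le_one.trans hp.le)
  exact ((hpow.comp continuous_fst).add ((hpow.comp continuous_snd).const_mul _)).sub
    (((continuous_norm_rpow_sub_two_mul_inner hp).comp continuous_swap).const_mul p)

theorem pBregman_smul (hp : 1 < p) {r : ℝ} (hr : 0 ≤ r) (a b : E) :
    pBregman p (r • a) (r • b) = r ^ p * pBregman p a b := by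
  simp only [pBregman, norm_smul, Real.norm_eq_abs, abs_of_nonneg hr, inner_smul_left,
    inner_smul_right, Real.mul_rpow hr (norm_nonneg _), conj_trivial]
  rw [← rpow_sub_one_mul_self hp hr, ← rpow_sub_two_mul_self hp hr]
  ring

theorem exists_le_mul_of_homogeneous {G : Type*} [NormedAddCommGroup G] [NormedSpace ℝ G]
    [ProperSpace G] {f g : G → ℝ} (hp : p ≠ 0) (hf : Continuous f) (hg : Continuous g)
    (hfhom : ∀ r : ℝ, 0 ≤ r → ∀ x, f (r • x) = r ^ p * f x)
    (hghom : ∀ r : ℝ, 0 ≤ r → ∀ x, g (r • x) = r ^ p * g x)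
    (hf0 : ∀ x, 0 ≤ f x) (hfg : ∀ x ≠ 0, f x = 0 → g x < 0) :
    ∃ C : ℝ, 0 ≤ C ∧ ∀ x, g x ≤ C * f x := by
  obtain ⟨n, hn⟩ : ∃ n : ℕ, Metric.sphere (0 : G) 1 ⊆ {x | g x < n * f x} := by
    refine (isCompact_sphere 0 1).elim_directed_cover _
      (fun n ↦ isOpen_lt hg (hf.const_mul (n : ℝ))) (fun x hx ↦ Set.mem_iUnion.2 ?_)
      (Monotone.directed_le fun m n hmn x (hx : g x < m * f x) ↦ hx.trans_le ?_)
    · obtain hfx | hfx := (hf0 x).eq_or_lt'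
      · exact ⟨0, by simpa [hfx] using hfg x (ne_zero_of_mem_unit_sphere ⟨x, hx⟩) hfx⟩
      · obtain ⟨n, hn⟩ := exists_nat_gt (g x / f x)
        exact ⟨n, (div_lt_iff₀ hfx).1 hn⟩
    · exact mul_le_mul_of_nonneg_right (Nat.cast_le.2 hmn) (hf0 x)
  refine ⟨n, Nat.cast_nonneg n, fun x ↦ ?_⟩
  obtain rfl | hx := eq_or_ne x 0
  · have hzero : ∀ h : G → ℝ, (∀ r : ℝ, 0 ≤ r → ∀ x, h (r • x) = r ^ p * h x) → h 0 = 0 := by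
      intro h hhom
      simpa [Real.zero_rpow hp] using hhom 0 le_rfl 0
    rw [hzero f hfhom, hzero g hghom, mul_zero]
  · have hunit : g (‖x‖⁻¹ • x) < n * f (‖x‖⁻¹ • x) := by
      refine hn (mem_sphere_zero_iff_norm.2 ?_)
      rw [norm_smul, norm_inv, norm_norm, inv_mul_cancel₀ (norm_ne_zero_iff.2 hx)]
    have hscale := mul_le_mul_of_nonneg_left hunit.le (by positivity : 0 ≤ ‖x‖ ^ p)
    rwa [mul_left_comm, ← hfhom _ (norm_nonneg x), ← hghom _ (norm_nonneg x),
      smul_inv_smul₀ (norm_ne_zero_iff.2 hx)] at hscale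

theorem exists_norm_sub_rpow_le_add_pBregman [FiniteDimensional ℝ E] (hp : 1 < p) {δ : ℝ}
    (hδ : 0 < δ) :
    ∃ C : ℝ, 0 ≤ C ∧ ∀ a b : E, ‖a - b‖ ^ p ≤ δ * ‖b‖ ^ p + C * pBregman p a b := by
  have hp0 : 0 < p := by linarith
  have hpow := continuous_norm_rpow (E := E) hp0.le
  obtain ⟨C, hC0, hC⟩ : ∃ C : ℝ, 0 ≤ C ∧ ∀ x : E × E,
      ‖x.1 - x.2‖ ^ p - δ * ‖x.2‖ ^ p ≤ C * pBregman p x.1 x.2 := by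
    refine exists_le_mul_of_homogeneous hp0.ne' (continuous_pBregman hp)
      ((hpow.comp (continuous_fst.sub continuous_snd)).sub
        ((hpow.comp continuous_snd).const_mul δ))
      (fun r hr x ↦ pBregman_smul hp hr x.1 x.2) (fun r hr x ↦ ?_)
      (fun x ↦ pBregman_nonneg hp x.1 x.2) (fun x hx h ↦ ?_)
    · simp only [Prod.smul_fst, Prod.smul_snd, ← smul_sub, norm_smul, Real.norm_eq_abs,
        abs_of_nonneg hr, Real.mul_rpow hr (norm_nonneg _)]
      ring
    · have heq : x.1 = x.2 := by
        by_contra hne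
        exact (pBregman_pos hp hne).ne' h
      have hx2 : x.2 ≠ 0 := fun h2 ↦ hx (Prod.ext (heq.trans h2) h2)
      rw [heq, sub_self, norm_zero, Real.zero_rpow hp0.ne', zero_sub, neg_lt_zero]
      positivity
  exact ⟨C, hC0, fun a b ↦ by linarith [hC (a, b)]⟩

theorem exists_norm_rpow_le_add_pBregman [FiniteDimensional ℝ E] {m M δ : ℝ} (hp : 1 < p)
    (hm : 0 < m) (hM : 0 < M) (hδ : 0 < δ) :
    ∃ C, 0 ≤ C ∧ ∀ (s t : ℝ) (a b : E), m ≤ s → ‖b‖ ≤ M →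
      ‖a‖ ^ p ≤ δ * ‖t‖ ^ p + C * pBregman p (t • b + s • a) (t • b) := by
  have hmp : 0 < m ^ p := by positivity
  have hp0 : 0 ≤ p := by linarith
  obtain ⟨C, hC, hbound⟩ := exists_norm_sub_rpow_le_add_pBregman (E := E) hp
    (δ := δ * m ^ p / M ^ p) (by positivity)
  refine ⟨C / m ^ p, by positivity, fun s t a b hs hb ↦ le_of_mul_le_mul_left ?_ hmp⟩
  calc m ^ p * ‖a‖ ^ p ≤ ‖(t • b + s • a) - t • b‖ ^ p := by
        rw [add_sub_cancel_left, norm_smul, Real.norm_of_nonneg (hm.le.trans hs),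
          Real.mul_rpow (hm.le.trans hs) (norm_nonneg _)]
        gcongr
    _ ≤ δ * m ^ p / M ^ p * ‖t • b‖ ^ p + C * pBregman p (t • b + s • a) (t • b) := hbound _ _
    _ ≤ δ * m ^ p / M ^ p * (‖t‖ ^ p * M ^ p) + C * pBregman p (t • b + s • a) (t • b) := by
        rw [norm_smul, Real.mul_rpow (norm_nonneg _) (norm_nonneg _)]
        gcongr
    _ = m ^ p * (δ * ‖t‖ ^ p + C / m ^ p * pBregman p (t • b + s • a) (t • b)) := by
        field_simp

end PBregman

section Gradient

variable {E : Type*} [NormedAddCommGroup E] [InnerProductSpace ℝ E] [CompleteSpace E]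
  {f g : E → ℝ} {x : E}

theorem norm_gradient (f : E → ℝ) (x : E) : ‖gradient f x‖ = ‖fderiv ℝ f x‖ := by
  simp [gradient]

theorem dist_gradient (f g : E → ℝ) (x : E) :
    dist (gradient f x) (gradient g x) = dist (fderiv ℝ f x) (fderiv ℝ g x) := by
  simp [gradient]

theorem gradient_eq_zero_of_notMem_tsupport (hx : x ∉ tsupport f) : gradient f x = 0 := by
  rw [← norm_eq_zero, norm_gradient, norm_eq_zero]
  exact image_eq_zero_of_notMem_tsupport fun h ↦ hx (tsupport_fderiv_subset ℝ h)

theorem gradient_mul (hf : DifferentiableAt ℝ f x) (hg : DifferentiableAt ℝ g x) :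
    gradient (fun y ↦ f y * g y) x = f x • gradient g x + g x • gradient f x := by
  simp [gradient, fderiv_fun_mul hf hg]

theorem gradient_comp {h : ℝ → ℝ} {h' : ℝ} (hh : HasDerivAt h h' (f x))
    (hf : DifferentiableAt ℝ f x) : gradient (fun y ↦ h (f y)) x = h' • gradient f x := by
  have hcomp : fderiv ℝ (fun y ↦ h (f y)) x = h' • fderiv ℝ f x :=
    (hh.comp_hasFDerivAt x hf.hasFDerivAt).fderiv
  simp [gradient, hcomp]

theorem continuousOn_gradient {s : Set E} (hf : ContDiffOn ℝ 1 f s) (hs : IsOpen s) :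
    ContinuousOn (gradient f) s :=
  (LinearIsometryEquiv.continuous _).comp_continuousOn
    (hf.continuousOn_fderiv_of_isOpen hs le_rfl)

theorem continuous_gradient (hf : ContDiff ℝ 1 f) : Continuous (gradient f) :=
  (LinearIsometryEquiv.continuous _).comp (hf.continuous_fderiv one_ne_zero)

theorem hasCompactSupport_gradient (hf : HasCompactSupport f) :
    HasCompactSupport (gradient f) :=
  hf.of_isClosed_subset (isClosed_tsupport _) <| closure_minimal
    (fun _ hx ↦ not_not.1 fun h ↦ hx (gradient_eq_zero_of_notMem_tsupport h))
    (isClosed_tsupport _)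

theorem gradient_eq_div_smul_add_smul_gradient_div {s : Set E} (hs : IsOpen s)
    (hg0 : ∀ y ∈ s, g y ≠ 0) (hx : x ∈ s) (hg : DifferentiableAt ℝ g x)
    (hfg : DifferentiableAt ℝ (fun y ↦ f y / g y) x) :
    gradient f x = (f x / g x) • gradient g x + g x • gradient (fun y ↦ f y / g y) x := by
  have heq : f =ᶠ[𝓝 x] fun y ↦ f y / g y * g y := by
    filter_upwards [hs.mem_nhds hx] with y hy using (div_mul_cancel₀ _ (hg0 y hy)).symm
  rw [heq.gradient_eq, gradient_mul hfg hg]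

end Gradient

section Mollification

open scoped Convolution

variable {E F : Type*} [NormedAddCommGroup E] [NormedSpace ℝ E] [FiniteDimensional ℝ E]
  [HasContDiffBump E] [MeasurableSpace E] [BorelSpace E] [NormedAddCommGroup F] [NormedSpace ℝ F]
  {μ : Measure E} [μ.IsAddHaarMeasure]

theorem tendstoUniformly_normed_convolution [CompleteSpace F] {ι : Type*} {l : Filter ι}
    {η : ι → ContDiffBump (0 : E)} (hη : Tendsto (fun i ↦ (η i).rOut) l (𝓝 0)) {f : E → F}
    (hf : UniformContinuous f) :
    TendstoUniformly (fun i ↦ (η i).normed μ ⋆[ContinuousLinearMap.lsmul ℝ ℝ, μ] f) f l := by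
  refine Metric.tendstoUniformly_iff.2 fun ε hε ↦ ?_
  obtain ⟨r, hr, hfr⟩ := Metric.uniformContinuous_iff.1 hf (ε / 2) (half_pos hε)
  filter_upwards [hη.eventually_lt_const hr] with i hi x
  rw [dist_comm]
  exact ((η i).dist_normed_convolution_le hf.continuous.aestronglyMeasurable fun y hy ↦
    (hfr ((Metric.mem_ball.1 hy).trans hi)).le).trans_lt (half_lt_self hε)

theorem support_normed_convolution_subset {η : ContDiffBump (0 : E)} {f : E → F} :
    Function.support (η.normed μ ⋆[ContinuousLinearMap.lsmul ℝ ℝ, μ] f) ⊆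
      Metric.cthickening η.rOut (tsupport f) := by
  refine (support_convolution_subset _).trans ?_
  rw [η.support_normed_eq]
  rintro _ ⟨x, hx, y, hy, rfl⟩
  refine Metric.mem_cthickening_of_dist_le _ y _ _ (subset_tsupport _ hy) ?_
  simpa using (mem_ball_zero_iff.1 hx).le

theorem fderiv_normed_convolution {η : ContDiffBump (0 : E)} {f : E → F}
    (hfc : HasCompactSupport f) (hf : ContDiff ℝ 1 f) :
    fderiv ℝ (η.normed μ ⋆[ContinuousLinearMap.lsmul ℝ ℝ, μ] f) =
      η.normed μ ⋆[ContinuousLinearMap.lsmul ℝ ℝ, μ] fderiv ℝ f :=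
  funext fun x ↦ (hfc.hasFDerivAt_convolution_right _ η.continuous_normed.locallyIntegrable hf
    x).fderiv

end Mollification

section TestFunctions

variable {d : ℕ} {Ω : Set (Euc d)} {p : ℝ} {V u v φ : Euc d → ℝ}

/-- A `C¹` test function on `Ω`: the class of test functions to which the weak inequality for
supersolutions extends by mollification. -/
structure IsC1TestFun (Ω : Set (Euc d)) (φ : Euc d → ℝ) : Prop where
  contDiff : ContDiff ℝ 1 φ
  hasCompactSupport : HasCompactSupport φ
  tsupport_subset : tsupport φ ⊆ Ω

/-- The integrand of the weak form of `Q'(v)`, tested against `φ`. -/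
def weakIntegrand (V : Euc d → ℝ) (p : ℝ) (v φ : Euc d → ℝ) (x : Euc d) : ℝ :=
  ‖gradient v x‖ ^ (p - 2) * ⟪gradient v x, gradient φ x⟫ + V x * v x ^ (p - 1) * φ x

theorem weakIntegrand_eq_zero_of_notMem_tsupport {x : Euc d} (hx : x ∉ tsupport φ) :
    weakIntegrand V p v φ x = 0 := by
  simp [weakIntegrand, gradient_eq_zero_of_notMem_tsupport hx,
    image_eq_zero_of_notMem_tsupport hx]

theorem abs_weakIntegrand_le (hp : 1 < p) {x : Euc d} (hv : 0 ≤ v x) {M : ℝ}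
    (hφ : |φ x| ≤ M) (hgφ : ‖gradient φ x‖ ≤ M) :
    |weakIntegrand V p v φ x| ≤
      (‖gradient v x‖ ^ (p - 1) + |V x| * v x ^ (p - 1)) * M := by
  rw [add_mul]
  refine (abs_add_le _ _).trans (add_le_add ?_ ?_)
  · exact (abs_norm_rpow_sub_two_mul_inner_le hp _ _).trans (by gcongr)
  · rw [abs_mul, abs_mul, abs_of_nonneg (Real.rpow_nonneg hv _)]
    gcongr

theorem tendsto_weakIntegrand {ι : Type*} {l : Filter ι} {ψ : ι → Euc d → ℝ} {x : Euc d}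
    (hψ : Tendsto (fun i ↦ ψ i x) l (𝓝 (φ x)))
    (hgψ : Tendsto (fun i ↦ gradient (ψ i) x) l (𝓝 (gradient φ x))) :
    Tendsto (fun i ↦ weakIntegrand V p v (ψ i) x) l (𝓝 (weakIntegrand V p v φ x)) :=
  ((tendsto_const_nhds.inner hgψ).const_mul _).add (hψ.const_mul _)

theorem LocBddPotential.integrableOn (hV : LocBddPotential Ω V) {K : Set (Euc d)}
    (hK : IsCompact K) (hKΩ : K ⊆ Ω) : IntegrableOn V K := by
  obtain ⟨C, hC⟩ := hV.2 K hKΩ hK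
  exact Measure.integrableOn_of_bounded hK.measure_lt_top.ne hV.1.aestronglyMeasurable
    (ae_restrict_of_forall_mem hK.measurableSet hC)

theorem LocBddPotential.integrableOn_weakIntegrand_of_isCompact (hV : LocBddPotential Ω V)
    (hΩ : IsOpen Ω) (hp : 1 < p) (hv : ContDiffOn ℝ 1 v Ω) (hφ : ContDiff ℝ 1 φ)
    {K : Set (Euc d)} (hK : IsCompact K) (hKΩ : K ⊆ Ω) :
    IntegrableOn (weakIntegrand V p v φ) K := by
  have hp0 : 0 ≤ p - 1 := by linarith
  refine Integrable.add ?_ ?_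
  · exact ((continuous_norm_rpow_sub_two_mul_inner hp).comp_continuousOn
      (((continuousOn_gradient hv hΩ).mono hKΩ).prodMk
        (continuous_gradient hφ).continuousOn)).integrableOn_compact hK
  · exact ((hV.integrableOn hK hKΩ).mul_continuousOn
      ((hv.continuousOn.mono hKΩ).rpow_const fun _ _ ↦ Or.inr hp0) hK).mul_continuousOn
      hφ.continuous.continuousOn hK

theorem LocBddPotential.integrableOn_weakIntegrand (hV : LocBddPotential Ω V)
    (hΩ : IsOpen Ω) (hp : 1 < p) (hv : ContDiffOn ℝ 1 v Ω) (hφ : IsC1TestFun Ω φ) :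
    IntegrableOn (weakIntegrand V p v φ) Ω :=
  (hV.integrableOn_weakIntegrand_of_isCompact hΩ hp hv hφ.contDiff
    hφ.hasCompactSupport.isCompact hφ.tsupport_subset).of_forall_sdiff_eq_zero hΩ.measurableSet
    fun _ hx ↦ weakIntegrand_eq_zero_of_notMem_tsupport hx.2

theorem IsTestFun.isC1TestFun (hu : IsTestFun Ω u) : IsC1TestFun Ω u :=
  ⟨hu.1.of_le (by exact_mod_cast le_top), hu.2.1, hu.2.2⟩

theorem isC1TestFun_of_contDiffOn (hΩ : IsOpen Ω) (hφ : ContDiffOn ℝ 1 φ Ω)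
    (hu : IsTestFun Ω u) (hφu : ∀ x, u x = 0 → φ x = 0) : IsC1TestFun Ω φ := by
  have hts : tsupport φ ⊆ tsupport u := closure_mono fun x hx h ↦ hx (hφu x h)
  refine ⟨contDiff_iff_contDiffAt.2 fun x ↦ ?_,
    hu.2.1.of_isClosed_subset (isClosed_tsupport _) hts, hts.trans hu.2.2⟩
  by_cases hx : x ∈ tsupport φ
  · exact hφ.contDiffAt (hΩ.mem_nhds (hu.2.2 (hts hx)))
  · exact contDiffAt_const.congr_of_eventuallyEq (notMem_tsupport_iff_eventuallyEq.1 hx)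

theorem IsC1TestFun.exists_isTestFun_tendstoUniformly (hφ : IsC1TestFun Ω φ) (hΩ : IsOpen Ω)
    (hφ0 : ∀ x, 0 ≤ φ x) :
    ∃ K ⊆ Ω, IsCompact K ∧ tsupport φ ⊆ K ∧ ∃ ψ : ℕ → Euc d → ℝ,
      (∀ n, IsTestFun Ω (ψ n)) ∧ (∀ n x, 0 ≤ ψ n x) ∧ (∀ n, tsupport (ψ n) ⊆ K) ∧
      TendstoUniformly ψ φ atTop ∧
      TendstoUniformly (fun n ↦ gradient (ψ n)) (gradient φ) atTop := by
  obtain ⟨hφ1, hφc, hφΩ⟩ := hφ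
  obtain ⟨r, hr, hrΩ⟩ := hφc.isCompact.exists_cthickening_subset_open hΩ hφΩ
  have hKc : IsCompact (Metric.cthickening r (tsupport φ)) := hφc.isCompact.cthickening
  let η (n : ℕ) : ContDiffBump (0 : Euc d) :=
    ⟨r / (n + 1) / 2, r / (n + 1), by positivity, half_lt_self (by positivity)⟩
  have hη : Tendsto (fun n ↦ (η n).rOut) atTop (𝓝 0) := by
    simpa only [mul_one_div, mul_zero] using tendsto_one_div_add_atTop_nhds_zero_nat.const_mul r
  have hηr (n : ℕ) : (η n).rOut ≤ r := div_le_self hr.le (by linarith [n.cast_nonneg (α := ℝ)])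
  let ψ (n : ℕ) : Euc d → ℝ :=
    convolution ((η n).normed volume) φ (ContinuousLinearMap.lsmul ℝ ℝ) volume
  have hψK (n : ℕ) : tsupport (ψ n) ⊆ Metric.cthickening r (tsupport φ) :=
    closure_minimal (support_normed_convolution_subset.trans
      (Metric.cthickening_mono (hηr n) _)) hKc.isClosed
  refine ⟨_, hrΩ, hKc, Metric.self_subset_cthickening _, ψ, fun n ↦ ⟨?_, ?_, ?_⟩, fun n x ↦ ?_,
    hψK, tendstoUniformly_normed_convolution hη
      (hφc.uniformContinuous_of_continuous hφ1.continuous), ?_⟩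
  · exact (η n).hasCompactSupport_normed.contDiff_convolution_left _ (η n).contDiff_normed
      hφ1.continuous.locallyIntegrable
  · exact hKc.of_isClosed_subset (isClosed_tsupport _) (hψK n)
  · exact (hψK n).trans hrΩ
  · exact integral_nonneg fun t ↦ mul_nonneg ((η n).nonneg_normed t) (hφ0 _)
  · have hfderiv := tendstoUniformly_normed_convolution (μ := volume) hη
      ((hφc.fderiv ℝ).uniformContinuous_of_continuous (hφ1.continuous_fderiv one_ne_zero))
    simp only [← fderiv_normed_convolution hφc hφ1] at hfderiv
    simpa only [Metric.tendstoUniformly_iff, dist_gradient] using hfderiv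

theorem IsC1TestFun.exists_abs_le_norm_gradient_le (hφ : IsC1TestFun Ω φ) :
    ∃ M : ℝ, ∀ x, |φ x| ≤ M ∧ ‖gradient φ x‖ ≤ M := by
  obtain ⟨M₁, hM₁⟩ := hφ.hasCompactSupport.exists_bound_of_continuous hφ.contDiff.continuous
  obtain ⟨M₂, hM₂⟩ := (hasCompactSupport_gradient hφ.hasCompactSupport).exists_bound_of_continuous
    (continuous_gradient hφ.contDiff)
  exact ⟨max M₁ M₂, fun x ↦ ⟨(hM₁ x).trans (le_max_left _ _), (hM₂ x).trans (le_max_right _ _)⟩⟩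

theorem tendsto_setIntegral_weakIntegrand (hΩ : IsOpen Ω) (hp : 1 < p)
    (hV : LocBddPotential Ω V) (hv : ContDiffOn ℝ 1 v Ω) (hv0 : ∀ x ∈ Ω, 0 < v x)
    {K : Set (Euc d)} (hK : IsCompact K) (hKΩ : K ⊆ Ω) {ψ : ℕ → Euc d → ℝ}
    (hψ : ∀ n, ContDiff ℝ 1 (ψ n)) (hφ : IsC1TestFun Ω φ)
    (hlim : TendstoUniformly ψ φ atTop)
    (hglim : TendstoUniformly (fun n ↦ gradient (ψ n)) (gradient φ) atTop) :
    Tendsto (fun n ↦ ∫ x in K, weakIntegrand V p v (ψ n) x) atTop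
      (𝓝 (∫ x in K, weakIntegrand V p v φ x)) := by
  have hp0 : 0 ≤ p - 1 := by linarith
  have hcont : ContinuousOn (fun x ↦ v x ^ (p - 1)) K :=
    (hv.continuousOn.mono hKΩ).rpow_const fun _ _ ↦ Or.inr hp0
  have hgcont : ContinuousOn (fun x ↦ ‖gradient v x‖ ^ (p - 1)) K :=
    ((continuousOn_gradient hv hΩ).mono hKΩ).norm.rpow_const fun _ _ ↦ Or.inr hp0
  have hint : IntegrableOn (fun x ↦ ‖gradient v x‖ ^ (p - 1) + |V x| * v x ^ (p - 1)) K :=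
    (hgcont.integrableOn_compact hK).add
      (IntegrableOn.mul_continuousOn (hV.integrableOn hK hKΩ).abs hcont hK)
  obtain ⟨M, hM⟩ := hφ.exists_abs_le_norm_gradient_le
  refine tendsto_integral_filter_of_dominated_convergence _
    (Eventually.of_forall fun n ↦ (hV.integrableOn_weakIntegrand_of_isCompact hΩ hp hv
      (hψ n) hK hKΩ).aestronglyMeasurable) ?_ (hint.mul_const (M + 1))
    (ae_of_all _ fun x ↦ tendsto_weakIntegrand (hlim.tendsto_at x) (hglim.tendsto_at x))
  filter_upwards [Metric.tendstoUniformly_iff.1 hlim 1 one_pos,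
    Metric.tendstoUniformly_iff.1 hglim 1 one_pos] with n hn hgn
  refine ae_restrict_of_forall_mem hK.measurableSet fun x hx ↦
    abs_weakIntegrand_le hp (hv0 x (hKΩ hx)).le ?_ ?_
  · exact (norm_le_norm_add_const_of_dist_le (dist_comm (φ x) _ ▸ (hn x).le)).trans
      (add_le_add_left (hM x).1 1)
  · exact (norm_le_norm_add_const_of_dist_le (dist_comm (gradient φ x) _ ▸ (hgn x).le)).trans
      (add_le_add_left (hM x).2 1)

theorem IsPositiveSupersolution.setIntegral_weakIntegrand_nonneg
    (hv : IsPositiveSupersolution Ω V p v) (hΩ : IsOpen Ω) (hp : 1 < p)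
    (hV : LocBddPotential Ω V) (hφ : IsC1TestFun Ω φ) (hφ0 : ∀ x, 0 ≤ φ x) :
    0 ≤ ∫ x in Ω, weakIntegrand V p v φ x := by
  obtain ⟨K, hKΩ, hK, hφK, ψ, hψ, hψ0, hψK, hlim, hglim⟩ :=
    hφ.exists_isTestFun_tendstoUniformly hΩ hφ0
  have hrestrict {χ : Euc d → ℝ} (hχ : tsupport χ ⊆ K) :
      ∫ x in Ω, weakIntegrand V p v χ x = ∫ x in K, weakIntegrand V p v χ x :=
    setIntegral_eq_of_subset_of_forall_sdiff_eq_zero hΩ.measurableSet hKΩ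
      fun _ hx ↦ weakIntegrand_eq_zero_of_notMem_tsupport fun h ↦ hx.2 (hχ h)
  rw [hrestrict hφK]
  refine ge_of_tendsto' (tendsto_setIntegral_weakIntegrand hΩ hp hV hv.1 hv.2.1 hK hKΩ
    (fun n ↦ (hψ n).isC1TestFun.contDiff) hφ hlim hglim) fun n ↦ ?_
  rw [← hrestrict (hψK n)]
  exact hv.2.2 (ψ n) (hψ n) (hψ0 n)

end TestFunctions

section Picone

variable {d : ℕ} {Ω : Set (Euc d)} {p : ℝ} {V u v : Euc d → ℝ} {x : Euc d}

theorem piconeL_eq_pBregman (hp : 1 < p) (huv : 0 ≤ u x / v x) :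
    piconeL p u v x = pBregman p (gradient u x) ((u x / v x) • gradient v x) := by
  rw [piconeL, pBregman, norm_smul, Real.norm_eq_abs, abs_of_nonneg huv,
    Real.mul_rpow huv (norm_nonneg _), Real.mul_rpow huv (norm_nonneg _), inner_smul_left,
    real_inner_comm, ← rpow_sub_two_mul_self hp huv, conj_trivial]
  ring

/-- Picone's test function `u ^ p * v ^ (1 - p)`, written so that it is visibly `C¹` for `p > 1`. -/
def piconeTestFun (p : ℝ) (u v : Euc d → ℝ) (x : Euc d) : ℝ :=
  v x * (u x / v x) ^ p

theorem IsTestFun.isC1TestFun_div (hu : IsTestFun Ω u) (hΩ : IsOpen Ω)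
    (hv : ContDiffOn ℝ 1 v Ω) (hv0 : ∀ x ∈ Ω, 0 < v x) :
    IsC1TestFun Ω fun x ↦ u x / v x :=
  isC1TestFun_of_contDiffOn hΩ
    (hu.isC1TestFun.contDiff.contDiffOn.div hv fun x hx ↦ (hv0 x hx).ne') hu
    fun x hx ↦ by rw [hx, zero_div]

theorem IsTestFun.isC1TestFun_piconeTestFun (hu : IsTestFun Ω u) (hΩ : IsOpen Ω) (hp : 1 < p)
    (hv : ContDiffOn ℝ 1 v Ω) (hv0 : ∀ x ∈ Ω, 0 < v x) :
    IsC1TestFun Ω (piconeTestFun p u v) := by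
  have hrpow : ContDiff ℝ 1 fun t : ℝ ↦ t ^ p :=
    Real.contDiff_rpow_const_of_le (n := 1) (by simpa using hp.le)
  refine isC1TestFun_of_contDiffOn hΩ
    (hv.mul (hrpow.comp (hu.isC1TestFun_div hΩ hv hv0).contDiff).contDiffOn) hu fun x hx ↦ ?_
  rw [piconeTestFun, hx, zero_div, Real.zero_rpow (by linarith), mul_zero]

theorem piconeTestFun_nonneg (hu : IsTestFun Ω u) (hp : 1 < p) (hv0 : ∀ x ∈ Ω, 0 < v x)
    (hu0 : ∀ x, 0 ≤ u x) (x : Euc d) : 0 ≤ piconeTestFun p u v x := by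
  by_cases hx : x ∈ Ω
  · have := hv0 x hx
    have := hu0 x
    unfold piconeTestFun
    positivity
  · rw [piconeTestFun, image_eq_zero_of_notMem_tsupport fun h ↦ hx (hu.2.2 h), zero_div,
      Real.zero_rpow (by linarith), mul_zero]

theorem gradient_piconeTestFun (hu : IsTestFun Ω u) (hΩ : IsOpen Ω) (hp : 1 < p)
    (hv : ContDiffOn ℝ 1 v Ω) (hv0 : ∀ x ∈ Ω, 0 < v x) (hu0 : 0 ≤ u x) (hx : x ∈ Ω) :
    gradient (piconeTestFun p u v) x =
      (p * (u x / v x) ^ (p - 1)) • gradient u x -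
        ((p - 1) * (u x / v x) ^ p) • gradient v x := by
  have hvx : DifferentiableAt ℝ v x :=
    (hv.contDiffAt (hΩ.mem_nhds hx)).differentiableAt one_ne_zero
  have hw : DifferentiableAt ℝ (fun y ↦ u y / v y) x :=
    (hu.isC1TestFun_div hΩ hv hv0).contDiff.differentiable one_ne_zero x
  have hpow := Real.hasDerivAt_rpow_const (x := u x / v x) (Or.inr hp.le)
  have hquot := gradient_eq_div_smul_add_smul_gradient_div hΩ (fun y hy ↦ (hv0 y hy).ne') hx hvx hw
  unfold piconeTestFun
  rw [gradient_mul hvx (hw.rpow_const (Or.inr hp.le)),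
    gradient_comp (f := fun y ↦ u y / v y) hpow hw, hquot,
    ← rpow_sub_one_mul_self hp (div_nonneg hu0 (hv0 x hx).le)]
  module

theorem energyDensity_sub_weakIntegrand_piconeTestFun (hu : IsTestFun Ω u) (hΩ : IsOpen Ω)
    (hp : 1 < p) (hv : ContDiffOn ℝ 1 v Ω) (hv0 : ∀ x ∈ Ω, 0 < v x) (hu0 : 0 ≤ u x) (hx : x ∈ Ω) :
    ‖gradient u x‖ ^ p + V x * |u x| ^ p - weakIntegrand V p v (piconeTestFun p u v) x =
      piconeL p u v x := by
  have hvx := hv0 x hx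
  have hpot : |u x| ^ p = v x ^ (p - 1) * piconeTestFun p u v x := by
    rw [piconeTestFun, ← mul_assoc, rpow_sub_one_mul_self hp hvx.le,
      ← Real.mul_rpow hvx.le (div_nonneg hu0 hvx.le), mul_div_cancel₀ _ hvx.ne', abs_of_nonneg hu0]
  have hgrad : ‖gradient v x‖ ^ (p - 2) * ⟪gradient v x, gradient v x⟫ = ‖gradient v x‖ ^ p := by
    rw [real_inner_self_eq_norm_mul_norm, ← mul_assoc, rpow_sub_two_mul_self hp (norm_nonneg _),
      rpow_sub_one_mul_self hp (norm_nonneg _)]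
  rw [weakIntegrand, gradient_piconeTestFun hu hΩ hp hv hv0 hu0 hx, hpot, piconeL, inner_sub_right,
    inner_smul_right, inner_smul_right, real_inner_comm (gradient u x)]
  linear_combination (p - 1) * (u x / v x) ^ p * hgrad

theorem IsC1TestFun.integrable_norm_gradient_rpow (hu : IsC1TestFun Ω u) (hp : 0 < p) :
    Integrable fun x ↦ ‖gradient u x‖ ^ p :=
  ((continuous_norm_rpow hp.le).comp
    (continuous_gradient hu.contDiff)).integrable_of_hasCompactSupport <|
    (hasCompactSupport_gradient hu.hasCompactSupport).comp_left (g := fun y ↦ ‖y‖ ^ p) <| by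
      rw [norm_zero, Real.zero_rpow hp.ne']

theorem LocBddPotential.integrableOn_mul_abs_rpow (hV : LocBddPotential Ω V) (hΩ : IsOpen Ω)
    (hp : 0 < p) (hu : IsC1TestFun Ω u) : IntegrableOn (fun x ↦ V x * |u x| ^ p) Ω := by
  have hK := hu.hasCompactSupport.isCompact
  have hpow : Continuous fun x ↦ |u x| ^ p :=
    (continuous_norm_rpow hp.le).comp hu.contDiff.continuous
  refine ((hV.integrableOn hK hu.tsupport_subset).mul_continuousOn hpow.continuousOn
    hK).of_forall_sdiff_eq_zero hΩ.measurableSet fun x hx ↦ ?_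
  simp [image_eq_zero_of_notMem_tsupport hx.2, hp.ne']

theorem piconeL_nonneg (hp : 1 < p) (huv : 0 ≤ u x / v x) : 0 ≤ piconeL p u v x := by
  rw [piconeL_eq_pBregman hp huv]
  exact pBregman_nonneg hp _ _

theorem IsPositiveSupersolution.setIntegral_piconeL_le_energyQ
    (hv : IsPositiveSupersolution Ω V p v) (hΩ : IsOpen Ω) (hp : 1 < p)
    (hV : LocBddPotential Ω V) (hu : IsTestFun Ω u) (hu0 : ∀ x, 0 ≤ u x) :
    IntegrableOn (piconeL p u v) Ω ∧ ∫ x in Ω, piconeL p u v x ≤ energyQ Ω V p u := by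
  have hφ := hu.isC1TestFun_piconeTestFun hΩ hp hv.1 hv.2.1
  have henergy : IntegrableOn (fun x ↦ ‖gradient u x‖ ^ p + V x * |u x| ^ p) Ω :=
    (hu.isC1TestFun.integrable_norm_gradient_rpow (by linarith)).integrableOn.add
      (hV.integrableOn_mul_abs_rpow hΩ (by linarith) hu.isC1TestFun)
  have hweak := hV.integrableOn_weakIntegrand hΩ hp hv.1 hφ
  have hident : Set.EqOn (fun x ↦ ‖gradient u x‖ ^ p + V x * |u x| ^ p -
      weakIntegrand V p v (piconeTestFun p u v) x) (piconeL p u v) Ω := fun x hx ↦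
    energyDensity_sub_weakIntegrand_piconeTestFun hu hΩ hp hv.1 hv.2.1 (hu0 x) hx
  refine ⟨(henergy.sub hweak).congr_fun hident hΩ.measurableSet, ?_⟩
  rw [← setIntegral_congr_fun hΩ.measurableSet hident, integral_sub henergy hweak]
  exact sub_le_self _ (hv.setIntegral_weakIntegrand_nonneg hΩ hp hV hφ
    (piconeTestFun_nonneg hu hp hv.2.1 hu0))

theorem IsPositiveSupersolution.energyQ_nonneg (hv : IsPositiveSupersolution Ω V p v)
    (hΩ : IsOpen Ω) (hp : 1 < p) (hV : LocBddPotential Ω V) (hu : IsTestFun Ω u)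
    (hu0 : ∀ x, 0 ≤ u x) : 0 ≤ energyQ Ω V p u :=
  (setIntegral_nonneg hΩ.measurableSet fun x hx ↦ piconeL_nonneg hp
    (div_nonneg (hu0 x) (hv.2.1 x hx).le)).trans
    (hv.setIntegral_piconeL_le_energyQ hΩ hp hV hu hu0).2

end Picone

section Poincare

open AffineMap Module Set
open scoped ENNReal

theorem rpow_lintegral_le_lintegral_rpow {α : Type*} [MeasurableSpace α] {μ : Measure α}
    [IsProbabilityMeasure μ] {F : Type*} [NormedAddCommGroup F] {f : α → F}
    (hf : AEStronglyMeasurable f μ) {p : ℝ} (hp : 1 ≤ p) :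
    (∫⁻ t, ‖f t‖ₑ ∂μ) ^ p ≤ ∫⁻ t, ‖f t‖ₑ ^ p ∂μ := by
  have hp0 : 0 < p := by linarith
  have h := eLpNorm'_le_eLpNorm'_of_exponent_le one_pos hp μ hf
  simp only [eLpNorm', ENNReal.rpow_one, div_one] at h
  rwa [one_div, ENNReal.le_rpow_inv_iff hp0] at h

theorem enorm_sub_rpow_le_lintegral_fderiv {E F : Type*} [NormedAddCommGroup E] [NormedSpace ℝ E]
    [NormedAddCommGroup F] [NormedSpace ℝ F] [CompleteSpace F] {f : E → F} (hf : ContDiff ℝ 1 f)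
    {p : ℝ} (hp : 1 ≤ p) (x y : E) :
    ‖f x - f y‖ₑ ^ p ≤
      ‖x - y‖ₑ ^ p * ∫⁻ t in Ioc (0 : ℝ) 1, ‖fderiv ℝ f (lineMap x y t)‖ₑ ^ p := by
  have hp0 : 0 ≤ p := by linarith
  have : IsProbabilityMeasure (volume.restrict (Ioc (0 : ℝ) 1)) := ⟨by simp⟩
  have hcD : Continuous fun t : ℝ ↦ fderiv ℝ f (lineMap x y t) :=
    (hf.continuous_fderiv one_ne_zero).comp lineMap_continuous
  have hc : Continuous fun t : ℝ ↦ fderiv ℝ f (lineMap x y t) (y - x) :=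
    hcD.clm_apply continuous_const
  have hftc : f y - f x = ∫ t in Ioc (0 : ℝ) 1, fderiv ℝ f (lineMap x y t) (y - x) := by
    rw [← intervalIntegral.integral_of_le zero_le_one,
      intervalIntegral.integral_eq_sub_of_hasDerivAt
        (fun t _ ↦ (hf.differentiable one_ne_zero _).hasFDerivAt.comp_hasDerivAt t
          hasDerivAt_lineMap) (hc.intervalIntegrable _ _)]
    simp
  calc ‖f x - f y‖ₑ ^ p
      ≤ (∫⁻ t in Ioc (0 : ℝ) 1, ‖fderiv ℝ f (lineMap x y t) (y - x)‖ₑ) ^ p := by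
        rw [enorm_sub_rev, hftc]
        exact ENNReal.rpow_le_rpow (enorm_integral_le_lintegral_enorm _) hp0
    _ ≤ ∫⁻ t in Ioc (0 : ℝ) 1, ‖fderiv ℝ f (lineMap x y t) (y - x)‖ₑ ^ p :=
        rpow_lintegral_le_lintegral_rpow hc.aestronglyMeasurable hp
    _ ≤ ∫⁻ t in Ioc (0 : ℝ) 1, ‖x - y‖ₑ ^ p * ‖fderiv ℝ f (lineMap x y t)‖ₑ ^ p := by
        refine lintegral_mono fun t ↦ ?_
        rw [← ENNReal.mul_rpow_of_nonneg _ _ hp0, mul_comm, enorm_sub_rev x y]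
        exact ENNReal.rpow_le_rpow (ContinuousLinearMap.le_opENorm _ _) hp0
    _ = ‖x - y‖ₑ ^ p * ∫⁻ t in Ioc (0 : ℝ) 1, ‖fderiv ℝ f (lineMap x y t)‖ₑ ^ p :=
        lintegral_const_mul _ (hcD.enorm.measurable.pow_const p)

variable {E : Type*} [NormedAddCommGroup E] [NormedSpace ℝ E] [FiniteDimensional ℝ E]
  [MeasurableSpace E] [BorelSpace E] {μ : Measure E} [μ.IsAddHaarMeasure] {g : E → ℝ≥0∞}
  {G : Set E}

theorem lintegral_comp_lineMap (hg : Measurable g) {t : ℝ} (ht : t ≠ 0) (x : E) :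
    ∫⁻ y, g (lineMap x y t) ∂μ = ENNReal.ofReal |(t ^ finrank ℝ E)⁻¹| * ∫⁻ y, g y ∂μ := by
  calc ∫⁻ y, g (lineMap x y t) ∂μ = ∫⁻ z, g ((1 - t) • x + z) ∂(μ.map (t • ·)) := by
        simp only [lineMap_apply_module]
        rw [lintegral_map (by fun_prop) (by fun_prop)]
    _ = _ := by
        rw [Measure.map_addHaar_smul _ ht, lintegral_smul_measure,
          lintegral_add_left_eq_self g, smul_eq_mul]

theorem setLIntegral_comp_lineMap_le (hg : Measurable g) (hG : MeasurableSet G)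
    (hconv : Convex ℝ G) {t : ℝ} (ht : t ∈ Icc (1 / 2) 1) {x : E} (hx : x ∈ G) :
    ∫⁻ y in G, g (lineMap x y t) ∂μ ≤ 2 ^ finrank ℝ E * ∫⁻ y in G, g y ∂μ := by
  have ht0 : 0 < t := lt_of_lt_of_le (by norm_num) ht.1
  have hjac : ENNReal.ofReal |(t ^ finrank ℝ E)⁻¹| ≤ 2 ^ finrank ℝ E := by
    rw [abs_of_pos (by positivity), ← inv_pow, ENNReal.ofReal_pow (by positivity)]
    gcongr
    refine ENNReal.ofReal_le_of_le_toReal ?_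
    simpa using inv_anti₀ (by norm_num) ht.1
  calc ∫⁻ y in G, g (lineMap x y t) ∂μ
      ≤ ∫⁻ y in G, G.indicator g (lineMap x y t) ∂μ := by
        refine setLIntegral_mono' hG fun y hy ↦ ?_
        rw [indicator_of_mem (hconv.lineMap_mem hx hy ⟨ht0.le, ht.2⟩)]
    _ ≤ ∫⁻ y, G.indicator g (lineMap x y t) ∂μ := setLIntegral_le_lintegral _ _
    _ ≤ 2 ^ finrank ℝ E * ∫⁻ y, G.indicator g y ∂μ := by
        rw [lintegral_comp_lineMap (hg.indicator hG) ht0.ne']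
        gcongr
    _ = _ := by rw [lintegral_indicator hG]

theorem measurable_comp_lineMap (hg : Measurable g) :
    Measurable fun z : (E × E) × ℝ ↦ g (lineMap z.1.1 z.1.2 z.2) := by
  simp only [lineMap_apply_module]
  fun_prop

/- One endpoint of the segment is at distance at least half its length from the point with
parameter `t`; integrating over that endpoint keeps the Jacobian bounded uniformly in `t`. -/
theorem setLIntegral_setLIntegral_comp_lineMap_le (hg : Measurable g) (hG : MeasurableSet G)
    (hconv : Convex ℝ G) {t : ℝ} (ht : t ∈ Icc 0 1) :
    ∫⁻ x in G, ∫⁻ y in G, g (lineMap x y t) ∂μ ∂μ ≤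
      2 ^ finrank ℝ E * μ G * ∫⁻ x in G, g x ∂μ := by
  have hconst : ∫⁻ _ in G, 2 ^ finrank ℝ E * ∫⁻ x in G, g x ∂μ ∂μ =
      2 ^ finrank ℝ E * μ G * ∫⁻ x in G, g x ∂μ := by
    rw [setLIntegral_const]; ring
  rw [← hconst]
  rcases le_total (1 / 2) t with h | h
  · exact setLIntegral_mono' hG fun x hx ↦
      setLIntegral_comp_lineMap_le hg hG hconv ⟨h, ht.2⟩ hx
  · have hm : Measurable fun z : E × E ↦ g (lineMap z.1 z.2 t) := by
      simp only [lineMap_apply_module]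
      fun_prop
    calc ∫⁻ x in G, ∫⁻ y in G, g (lineMap x y t) ∂μ ∂μ
        = ∫⁻ y in G, ∫⁻ x in G, g (lineMap y x (1 - t)) ∂μ ∂μ := by
          simp only [lineMap_apply_one_sub]
          exact lintegral_lintegral_swap hm.aemeasurable
      _ ≤ ∫⁻ _ in G, 2 ^ finrank ℝ E * ∫⁻ x in G, g x ∂μ ∂μ :=
          setLIntegral_mono' hG fun y hy ↦ setLIntegral_comp_lineMap_le hg hG hconv
            ⟨by linarith, by linarith [ht.1]⟩ hy

theorem lintegral_lintegral_enorm_sub_rpow_le {F : Type*} [NormedAddCommGroup F] [NormedSpace ℝ F]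
    [CompleteSpace F] {f : E → F} (hf : ContDiff ℝ 1 f) {p : ℝ} (hp : 1 ≤ p)
    (hG : MeasurableSet G) (hconv : Convex ℝ G) :
    ∫⁻ x in G, ∫⁻ y in G, ‖f x - f y‖ₑ ^ p ∂μ ∂μ ≤
      Metric.ediam G ^ p * (2 ^ finrank ℝ E * μ G) * ∫⁻ x in G, ‖fderiv ℝ f x‖ₑ ^ p ∂μ := by
  set g : E → ℝ≥0∞ := fun x ↦ ‖fderiv ℝ f x‖ₑ ^ p
  set ν : Measure ℝ := volume.restrict (Ioc 0 1)
  have hg : Measurable g := (hf.continuous_fderiv one_ne_zero).enorm.measurable.pow_const p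
  have hm := measurable_comp_lineMap hg
  have hmν : Measurable fun z : E × E ↦ ∫⁻ t, g (lineMap z.1 z.2 t) ∂ν := hm.lintegral_prod_right'
  calc ∫⁻ x in G, ∫⁻ y in G, ‖f x - f y‖ₑ ^ p ∂μ ∂μ
      ≤ ∫⁻ x in G, ∫⁻ y in G, Metric.ediam G ^ p * ∫⁻ t, g (lineMap x y t) ∂ν ∂μ ∂μ := by
        refine setLIntegral_mono' hG fun x hx ↦ setLIntegral_mono' hG fun y hy ↦ ?_
        refine (enorm_sub_rpow_le_lintegral_fderiv hf hp x y).trans ?_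
        gcongr
        rw [← edist_eq_enorm_sub]
        exact Metric.edist_le_ediam_of_mem hx hy
    _ = Metric.ediam G ^ p * ∫⁻ z, ∫⁻ t, g (lineMap z.1 z.2 t) ∂ν
          ∂((μ.restrict G).prod (μ.restrict G)) := by
        rw [← lintegral_const_mul _ hmν]
        exact (lintegral_prod _ (hmν.const_mul _).aemeasurable).symm
    _ = Metric.ediam G ^ p * ∫⁻ t, ∫⁻ x in G, ∫⁻ y in G, g (lineMap x y t) ∂μ ∂μ ∂ν := by
        rw [lintegral_lintegral_swap hm.aemeasurable]
        congr 1
        exact lintegral_congr fun t ↦ lintegral_prod (fun z : E × E ↦ g (lineMap z.1 z.2 t))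
          (hm.comp (measurable_id.prodMk measurable_const)).aemeasurable
    _ ≤ Metric.ediam G ^ p * ∫⁻ _, 2 ^ finrank ℝ E * μ G * ∫⁻ x in G, g x ∂μ ∂ν := by
        gcongr 1
        exact setLIntegral_mono' measurableSet_Ioc fun t ht ↦
          setLIntegral_setLIntegral_comp_lineMap_le hg hG hconv (Ioc_subset_Icc_self ht)
    _ = _ := by simp [ν, mul_assoc]

end Poincare

section PoincareConstants

open scoped ENNReal NNReal

theorem measure_mul_setLIntegral_enorm_sub_rpow_le {α F : Type*} [MeasurableSpace α]
    {μ : Measure α} [SFinite μ] [NormedAddCommGroup F] {f : α → F} (hf : StronglyMeasurable f)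
    {p : ℝ} (hp : 1 ≤ p) {A G : Set α} (hAG : A ⊆ G) (c : F) :
    μ A * ∫⁻ x in G, ‖f x - c‖ₑ ^ p ∂μ ≤ 2 ^ (p - 1) *
      (∫⁻ x in G, ∫⁻ y in G, ‖f x - f y‖ₑ ^ p ∂μ ∂μ +
        μ G * ∫⁻ y in A, ‖f y - c‖ₑ ^ p ∂μ) := by
  have hc : Measurable fun x ↦ ‖f x - c‖ₑ ^ p :=
    (hf.sub stronglyMeasurable_const).enorm.pow_const p
  have hff : Measurable fun z : α × α ↦ ‖f z.1 - f z.2‖ₑ ^ p :=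
    ((hf.comp_measurable measurable_fst).sub (hf.comp_measurable measurable_snd)).enorm.pow_const p
  calc μ A * ∫⁻ x in G, ‖f x - c‖ₑ ^ p ∂μ = ∫⁻ x in G, ∫⁻ _ in A, ‖f x - c‖ₑ ^ p ∂μ ∂μ := by
        simp only [setLIntegral_const]
        rw [lintegral_mul_const _ hc, mul_comm]
    _ ≤ ∫⁻ x in G, ∫⁻ y in A, 2 ^ (p - 1) * (‖f x - f y‖ₑ ^ p + ‖f y - c‖ₑ ^ p) ∂μ ∂μ := by
        refine lintegral_mono fun x ↦ lintegral_mono fun y ↦ ?_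
        have htri : ‖f x - c‖ₑ ≤ ‖f x - f y‖ₑ + ‖f y - c‖ₑ := by
          simpa using enorm_add_le (f x - f y) (f y - c)
        exact (ENNReal.rpow_le_rpow htri (by linarith)).trans
          (ENNReal.rpow_add_le_mul_rpow_add_rpow _ _ hp)
    _ = ∫⁻ x in G, 2 ^ (p - 1) *
          (∫⁻ y in A, ‖f x - f y‖ₑ ^ p ∂μ + ∫⁻ y in A, ‖f y - c‖ₑ ^ p ∂μ) ∂μ := by
        refine lintegral_congr fun x ↦ ?_
        rw [lintegral_const_mul' _ _ (by finiteness), lintegral_add_right _ hc]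
    _ = 2 ^ (p - 1) * (∫⁻ x in G, ∫⁻ y in A, ‖f x - f y‖ₑ ^ p ∂μ ∂μ +
          μ G * ∫⁻ y in A, ‖f y - c‖ₑ ^ p ∂μ) := by
        have hfA : Measurable fun x ↦ ∫⁻ y in A, ‖f x - f y‖ₑ ^ p ∂μ := hff.lintegral_prod_right'
        rw [lintegral_const_mul _ (hfA.add_const _), lintegral_add_left hfA, setLIntegral_const,
          mul_comm (μ G)]
    _ ≤ _ := by
        gcongr 2
        exact lintegral_mono fun x ↦ lintegral_mono_set hAG

variable {E F : Type*} [NormedAddCommGroup E] [NormedSpace ℝ E] [FiniteDimensional ℝ E]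
  [MeasurableSpace E] [BorelSpace E] {μ : Measure E} [μ.IsAddHaarMeasure]
  [NormedAddCommGroup F] [NormedSpace ℝ F] [CompleteSpace F] {p : ℝ} {G : Set E}

theorem exists_lintegral_lintegral_enorm_sub_rpow_le (hp : 1 ≤ p) (hG : MeasurableSet G)
    (hconv : Convex ℝ G) (hb : Bornology.IsBounded G) :
    ∃ P : ℝ≥0, ∀ f : E → F, ContDiff ℝ 1 f →
      ∫⁻ x in G, ∫⁻ y in G, ‖f x - f y‖ₑ ^ p ∂μ ∂μ ≤
        P * ∫⁻ x in G, ‖fderiv ℝ f x‖ₑ ^ p ∂μ := by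
  have hdiam : Metric.ediam G ^ p ≠ ∞ :=
    ENNReal.rpow_ne_top_of_nonneg (by linarith) (Metric.isBounded_iff_ediam_ne_top.1 hb)
  have hGtop : μ G ≠ ∞ := hb.measure_lt_top.ne
  obtain ⟨P, hP⟩ : ∃ P : ℝ≥0, P = Metric.ediam G ^ p * (2 ^ Module.finrank ℝ E * μ G) :=
    ⟨_, ENNReal.coe_toNNReal (by finiteness)⟩
  refine ⟨P, fun f hf ↦ ?_⟩
  rw [hP]
  exact lintegral_lintegral_enorm_sub_rpow_le hf hp hG hconv

theorem exists_setLIntegral_enorm_sub_rpow_le_of_subset (hp : 1 ≤ p) (hG : MeasurableSet G)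
    (hconv : Convex ℝ G) (hb : Bornology.IsBounded G) {A : Set E} (hAG : A ⊆ G) (hA : μ A ≠ 0) :
    ∃ T : ℝ≥0, ∀ f : E → F, ContDiff ℝ 1 f → ∀ c : F,
      ∫⁻ x in G, ‖f x - c‖ₑ ^ p ∂μ ≤
        T * (∫⁻ x in G, ‖fderiv ℝ f x‖ₑ ^ p ∂μ + ∫⁻ x in A, ‖f x - c‖ₑ ^ p ∂μ) := by
  obtain ⟨P, hP⟩ := exists_lintegral_lintegral_enorm_sub_rpow_le (F := F) (μ := μ) hp hG hconv hb
  have hGtop : μ G ≠ ∞ := hb.measure_lt_top.ne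
  have h2p : (2 : ℝ≥0∞) ^ (p - 1) ≠ ∞ := ENNReal.rpow_ne_top_of_nonneg (by linarith) (by simp)
  obtain ⟨T, hT⟩ : ∃ T : ℝ≥0, T = (μ A)⁻¹ * (2 ^ (p - 1) * (P + μ G)) :=
    ⟨_, ENNReal.coe_toNNReal (by finiteness)⟩
  refine ⟨T, fun f hf c ↦ ?_⟩
  rw [hT, mul_assoc,
    ← ENNReal.mul_le_iff_le_inv hA (measure_ne_top_of_subset hAG hGtop)]
  calc μ A * ∫⁻ x in G, ‖f x - c‖ₑ ^ p ∂μ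
      ≤ 2 ^ (p - 1) * (∫⁻ x in G, ∫⁻ y in G, ‖f x - f y‖ₑ ^ p ∂μ ∂μ +
          μ G * ∫⁻ y in A, ‖f y - c‖ₑ ^ p ∂μ) :=
        measure_mul_setLIntegral_enorm_sub_rpow_le hf.continuous.stronglyMeasurable hp hAG c
    _ ≤ 2 ^ (p - 1) * ((P + μ G) * ∫⁻ x in G, ‖fderiv ℝ f x‖ₑ ^ p ∂μ +
          (P + μ G) * ∫⁻ y in A, ‖f y - c‖ₑ ^ p ∂μ) := by
        gcongr
        · exact (hP f hf).trans (by gcongr; exact le_self_add)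
        · exact le_add_self
    _ = _ := by ring

theorem exists_mem_setLIntegral_enorm_sub_rpow_le (hp : 1 ≤ p) (hG : MeasurableSet G)
    (hconv : Convex ℝ G) (hb : Bornology.IsBounded G) (hG0 : μ G ≠ 0) :
    ∃ T : ℝ≥0, ∀ f : E → F, ContDiff ℝ 1 f → ∃ y ∈ G,
      ∫⁻ x in G, ‖f x - f y‖ₑ ^ p ∂μ ≤ T * ∫⁻ x in G, ‖fderiv ℝ f x‖ₑ ^ p ∂μ := by
  obtain ⟨P, hP⟩ := exists_lintegral_lintegral_enorm_sub_rpow_le (F := F) (μ := μ) hp hG hconv hb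
  obtain ⟨T, hT⟩ : ∃ T : ℝ≥0, T = (μ G)⁻¹ * P := ⟨_, ENNReal.coe_toNNReal (by finiteness)⟩
  refine ⟨T, fun f hf ↦ ?_⟩
  have hff : Measurable fun z : E × E ↦ ‖f z.1 - f z.2‖ₑ ^ p :=
    ((hf.continuous.comp continuous_fst).sub
      (hf.continuous.comp continuous_snd)).enorm.measurable.pow_const p
  obtain ⟨y, hy, hle⟩ :=
    exists_le_setLAverage hG0 hb.measure_lt_top.ne
      (hff.lintegral_prod_right' (ν := μ.restrict G)).aemeasurable
  refine ⟨y, hy, ?_⟩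
  rw [setLAverage_eq, ENNReal.div_eq_inv_mul] at hle
  simp only [enorm_sub_rev (f _) (f y)]
  rw [hT, mul_assoc]
  exact hle.trans (by gcongr; exact hP f hf)

end PoincareConstants

section Propagation

open scoped ENNReal NNReal

theorem le_two_mul_of_le_inv_two_mul_add {a b : ℝ≥0∞} (ha : a ≠ ∞) (h : a ≤ 2⁻¹ * a + b) :
    a ≤ 2 * b := by
  have hhalf : 2⁻¹ * a + 2⁻¹ * a ≤ 2⁻¹ * a + b := by
    rwa [← add_mul, ENNReal.inv_two_add_inv_two, one_mul]
  have hab : 2⁻¹ * a ≤ b := (ENNReal.add_le_add_iff_left (by finiteness)).1 hhalf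
  calc a = 2 * (2⁻¹ * a) := by
        rw [← mul_assoc, ENNReal.mul_inv_cancel two_ne_zero ENNReal.ofNat_ne_top, one_mul]
    _ ≤ 2 * b := by gcongr

variable {ι : Type*} {l : Filter ι} {e n ε : ι → ℝ≥0∞}

theorem exists_eventually_le_of_absorption {T S : ℝ≥0} (he : ∀ k, e k ≠ ∞)
    (hε : Tendsto ε l (𝓝 0))
    (hen : ∀ δ : ℝ≥0, 0 < δ → ∃ C : ℝ≥0, ∀ k, e k ≤ δ * n k + C * ε k)
    (hne : ∀ᶠ k in l, n k ≤ T * (e k + S)) : ∃ S' : ℝ≥0, ∀ᶠ k in l, n k ≤ S' := by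
  have hδ : (2 * (T + 1))⁻¹ * T ≤ (2 : ℝ≥0)⁻¹ := by
    rw [mul_inv, mul_assoc]
    exact mul_le_of_le_one_right' (inv_mul_le_one_of_le₀ le_self_add zero_le)
  obtain ⟨C, hC⟩ := hen (2 * (T + 1))⁻¹ (by positivity)
  have hCε : Tendsto (fun k ↦ C * ε k) l (𝓝 0) := by
    simpa using ENNReal.Tendsto.const_mul hε (Or.inr ENNReal.coe_ne_top)
  refine ⟨T * (2 * (2⁻¹ * S + 1) + S), ?_⟩
  filter_upwards [hne, ENNReal.tendsto_nhds_zero.1 hCε 1 one_pos] with k hnk hεk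
  have habs : e k ≤ 2⁻¹ * e k + (2⁻¹ * S + 1) := calc
    e k ≤ ((2 * (T + 1))⁻¹ : ℝ≥0) * n k + C * ε k := hC k
    _ ≤ ((2 * (T + 1))⁻¹ : ℝ≥0) * (T * (e k + S)) + 1 := by gcongr
    _ ≤ (2⁻¹ : ℝ≥0) * (e k + S) + 1 := by
      rw [← mul_assoc, ← ENNReal.coe_mul]
      gcongr
    _ = 2⁻¹ * e k + (2⁻¹ * S + 1) := by
      rw [ENNReal.coe_inv two_ne_zero, ENNReal.coe_ofNat, mul_add, add_assoc]
  have hek := le_two_mul_of_le_inv_two_mul_add (he k) habs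
  calc n k ≤ T * (e k + S) := hnk
    _ ≤ T * (2 * (2⁻¹ * S + 1) + S) := by gcongr
    _ = _ := by push_cast [ENNReal.coe_inv two_ne_zero]; rfl

theorem tendsto_zero_of_eventually_le_of_forall_le_mul_add {S : ℝ≥0}
    (hn : ∀ᶠ k in l, n k ≤ S) (hε : Tendsto ε l (𝓝 0))
    (hen : ∀ δ : ℝ≥0, 0 < δ → ∃ C : ℝ≥0, ∀ k, e k ≤ δ * n k + C * ε k) :
    Tendsto e l (𝓝 0) := by
  rw [ENNReal.tendsto_nhds_zero]
  intro η hη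
  obtain ⟨δ, hδ, hδS⟩ :=
    ENNReal.exists_nnreal_pos_mul_lt (ENNReal.coe_ne_top (r := S)) (ENNReal.half_pos hη.ne').ne'
  obtain ⟨C, hC⟩ := hen δ hδ
  have hCε : Tendsto (fun k ↦ C * ε k) l (𝓝 0) := by
    simpa using ENNReal.Tendsto.const_mul hε (Or.inr ENNReal.coe_ne_top)
  filter_upwards [hn, ENNReal.tendsto_nhds_zero.1 hCε _ (ENNReal.half_pos hη.ne')] with k hnk hεk
  calc e k ≤ δ * n k + C * ε k := hC k
    _ ≤ δ * S + η / 2 := by gcongr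
    _ ≤ η / 2 + η / 2 := by gcongr
    _ = η := ENNReal.add_halves η

theorem forall_isCompact_of_isPreconnected {X : Type*} [TopologicalSpace X] {Ω : Set X}
    (hΩ : IsPreconnected Ω) {P : Set X → Prop} (hmono : ∀ s t, s ⊆ t → P t → P s)
    (hunion : ∀ s t, P s → P t → P (s ∪ t))
    (hstep : ∀ x ∈ Ω, ∃ U, IsOpen U ∧ x ∈ U ∧
      ∀ A ⊆ U, IsOpen A → A.Nonempty → P A → P U)
    {A₀ : Set X} (hA₀ : IsOpen A₀) (hA₀Ω : (Ω ∩ A₀).Nonempty) (hPA₀ : P A₀)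
    {K : Set X} (hK : IsCompact K) (hKΩ : K ⊆ Ω) : P K := by
  set S : Set X := {x | ∃ s, IsOpen s ∧ x ∈ s ∧ P s}
  have hS : IsOpen S :=
    isOpen_iff_forall_mem_open.2 fun x ⟨s, hs, hxs, hPs⟩ ↦ ⟨s, fun y hy ↦ ⟨s, hs, hy, hPs⟩, hs, hxs⟩
  have hA₀S : (Ω ∩ S).Nonempty := hA₀Ω.mono fun x hx ↦ ⟨hx.1, A₀, hA₀, hx.2, hPA₀⟩
  have hΩS : Ω ⊆ S := by
    refine hΩ.subset_of_closure_inter_subset hS hA₀S fun x ⟨hxS, hxΩ⟩ ↦ ?_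
    obtain ⟨U, hU, hxU, hPU⟩ := hstep x hxΩ
    obtain ⟨y, hyU, s, hs, hys, hPs⟩ := mem_closure_iff.1 hxS U hU hxU
    exact ⟨U, hU, hxU, hPU (s ∩ U) Set.inter_subset_right (hs.inter hU) ⟨y, hys, hyU⟩
      (hmono _ _ Set.inter_subset_left hPs)⟩
  refine hK.induction_on (hmono _ _ (Set.empty_subset _) hPA₀) (fun s t ↦ hmono s t)
    (fun s t ↦ hunion s t) fun x hx ↦ ?_
  obtain ⟨s, hs, hxs, hPs⟩ := hΩS (hKΩ hx)
  exact ⟨s, mem_nhdsWithin_of_mem_nhds (hs.mem_nhds hxs), hPs⟩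

end Propagation

section LocalConvergence

open scoped ENNReal NNReal

theorem lintegral_enorm_rpow_ne_top {X F : Type*} [TopologicalSpace X] [T2Space X]
    [MeasurableSpace X] [OpensMeasurableSpace X] {μ : Measure X} [IsFiniteMeasureOnCompacts μ]
    [NormedAddCommGroup F] {p : ℝ} (hp : 0 ≤ p) {K : Set X} (hK : IsCompact K) {f : X → F}
    (hf : ContinuousOn f K) : ∫⁻ x in K, ‖f x‖ₑ ^ p ∂μ ≠ ∞ := by
  have h := ((hf.norm.rpow_const fun _ _ ↦ Or.inr hp).integrableOn_compact (μ := μ) hK).2.ne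
  simpa only [Real.enorm_rpow_of_nonneg (norm_nonneg _) hp, enorm_norm] using h

variable {ι E F : Type*} {l : Filter ι} [NormedAddCommGroup E] [NormedSpace ℝ E]
  [MeasurableSpace E] {μ : Measure E} [NormedAddCommGroup F] [NormedSpace ℝ F]
  {p : ℝ} {Ω A K : Set E} {w : ι → E → F} {ε : ι → ℝ≥0∞}

/-- On every compact subset of `Ω` the gradient energy of the family `w` is controlled, up to an
arbitrarily small multiple of the `L^p` norm of `w`, by the error terms `ε`. -/
def HasLocalEnergyBound (μ : Measure E) (Ω : Set E) (p : ℝ) (w : ι → E → F) (ε : ι → ℝ≥0∞) :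
    Prop :=
  ∀ K ⊆ Ω, IsCompact K → ∀ δ : ℝ≥0, 0 < δ → ∃ C : ℝ≥0, ∀ k,
    ∫⁻ x in K, ‖fderiv ℝ (w k) x‖ₑ ^ p ∂μ ≤
      δ * ∫⁻ x in K, ‖w k x‖ₑ ^ p ∂μ + C * ε k

variable [FiniteDimensional ℝ E] [BorelSpace E] [μ.IsAddHaarMeasure] [CompleteSpace F]

theorem HasLocalEnergyBound.exists_eventually_setLIntegral_le (h : HasLocalEnergyBound μ Ω p w ε)
    (hΩ : IsOpen Ω) (hΩc : IsPreconnected Ω) (hp : 1 ≤ p) (hw : ∀ k, ContDiff ℝ 1 (w k))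
    (hε : Tendsto ε l (𝓝 0)) (hA : IsOpen A) (hΩA : (Ω ∩ A).Nonempty)
    (hwA : ∃ S : ℝ≥0, ∀ᶠ k in l, ∫⁻ x in A, ‖w k x‖ₑ ^ p ∂μ ≤ S) (hK : IsCompact K)
    (hKΩ : K ⊆ Ω) : ∃ S : ℝ≥0, ∀ᶠ k in l, ∫⁻ x in K, ‖w k x‖ₑ ^ p ∂μ ≤ S := by
  refine forall_isCompact_of_isPreconnected hΩc
    (P := fun s ↦ ∃ S : ℝ≥0, ∀ᶠ k in l, ∫⁻ x in s, ‖w k x‖ₑ ^ p ∂μ ≤ S)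
    (fun s t hst ⟨S, hS⟩ ↦ ⟨S, hS.mono fun k ↦ (lintegral_mono_set hst).trans⟩)
    (fun s t ⟨S, hS⟩ ⟨T, hT⟩ ↦ ⟨S + T, ?_⟩) (fun x hx ↦ ?_) hA hΩA hwA hK hKΩ
  · filter_upwards [hS, hT] with k hSk hTk
    rw [ENNReal.coe_add]
    exact (lintegral_union_le _ _ _).trans (add_le_add hSk hTk)
  obtain ⟨r, hr, hrΩ⟩ :=
    Metric.nhds_basis_closedBall.mem_iff.1 (hΩ.mem_nhds hx)
  refine ⟨Metric.ball x r, Metric.isOpen_ball, Metric.mem_ball_self hr,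
    fun A' hA'r hA' hA'ne ⟨S, hS⟩ ↦ ?_⟩
  have hKr := isCompact_closedBall x r
  obtain ⟨T, hT⟩ := exists_setLIntegral_enorm_sub_rpow_le_of_subset (F := F) (μ := μ) hp
    measurableSet_closedBall (convex_closedBall x r) Metric.isBounded_closedBall
    (hA'r.trans Metric.ball_subset_closedBall) (hA'.measure_pos μ hA'ne).ne'
  obtain ⟨S', hS'⟩ := exists_eventually_le_of_absorption (S := S)
    (fun k ↦ lintegral_enorm_rpow_ne_top (by linarith) hKr
      ((hw k).continuous_fderiv one_ne_zero).continuousOn) hε (h _ hrΩ hKr) <| by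
    filter_upwards [hS] with k hSk
    have := hT (w k) (hw k) 0
    simp only [sub_zero] at this
    exact this.trans (by gcongr)
  exact ⟨S', hS'.mono fun k ↦ (lintegral_mono_set Metric.ball_subset_closedBall).trans⟩

theorem HasLocalEnergyBound.tendsto_setLIntegral_fderiv (h : HasLocalEnergyBound μ Ω p w ε)
    (hΩ : IsOpen Ω) (hΩc : IsPreconnected Ω) (hp : 1 ≤ p) (hw : ∀ k, ContDiff ℝ 1 (w k))
    (hε : Tendsto ε l (𝓝 0)) (hA : IsOpen A) (hΩA : (Ω ∩ A).Nonempty)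
    (hwA : ∃ S : ℝ≥0, ∀ᶠ k in l, ∫⁻ x in A, ‖w k x‖ₑ ^ p ∂μ ≤ S) (hK : IsCompact K)
    (hKΩ : K ⊆ Ω) : Tendsto (fun k ↦ ∫⁻ x in K, ‖fderiv ℝ (w k) x‖ₑ ^ p ∂μ) l (𝓝 0) := by
  obtain ⟨S, hS⟩ := h.exists_eventually_setLIntegral_le hΩ hΩc hp hw hε hA hΩA hwA hK hKΩ
  exact tendsto_zero_of_eventually_le_of_forall_le_mul_add hS hε (h K hKΩ hK)

theorem tendsto_setLIntegral_sub_of_tendsto_fderiv (hΩ : IsOpen Ω) (hΩc : IsPreconnected Ω)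
    (hp : 1 ≤ p) (hw : ∀ k, ContDiff ℝ 1 (w k))
    (hD : ∀ K ⊆ Ω, IsCompact K →
      Tendsto (fun k ↦ ∫⁻ x in K, ‖fderiv ℝ (w k) x‖ₑ ^ p ∂μ) l (𝓝 0))
    (hA : IsOpen A) (hΩA : (Ω ∩ A).Nonempty) {c : ι → F}
    (hwA : Tendsto (fun k ↦ ∫⁻ x in A, ‖w k x - c k‖ₑ ^ p ∂μ) l (𝓝 0))
    (hKΩ : K ⊆ Ω) (hK : IsCompact K) :
    Tendsto (fun k ↦ ∫⁻ x in K, ‖w k x - c k‖ₑ ^ p ∂μ) l (𝓝 0) := by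
  refine forall_isCompact_of_isPreconnected hΩc
    (P := fun s ↦ Tendsto (fun k ↦ ∫⁻ x in s, ‖w k x - c k‖ₑ ^ p ∂μ) l (𝓝 0))
    (fun s t hst ht ↦ tendsto_of_tendsto_of_tendsto_of_le_of_le tendsto_const_nhds ht
      (fun _ ↦ zero_le) fun k ↦ lintegral_mono_set hst)
    (fun s t hs ht ↦ tendsto_of_tendsto_of_tendsto_of_le_of_le tendsto_const_nhds
      (by simpa using hs.add ht) (fun _ ↦ zero_le) fun k ↦ lintegral_union_le _ _ _)
    (fun x hx ↦ ?_) hA hΩA hwA hK hKΩ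
  obtain ⟨r, hr, hrΩ⟩ :=
    Metric.nhds_basis_closedBall.mem_iff.1 (hΩ.mem_nhds hx)
  refine ⟨Metric.ball x r, Metric.isOpen_ball, Metric.mem_ball_self hr,
    fun A' hA'r hA' hA'ne hwA' ↦ ?_⟩
  obtain ⟨T, hT⟩ := exists_setLIntegral_enorm_sub_rpow_le_of_subset (F := F) (μ := μ) hp
    measurableSet_closedBall (convex_closedBall x r) Metric.isBounded_closedBall
    (hA'r.trans Metric.ball_subset_closedBall) (hA'.measure_pos μ hA'ne).ne'
  have hlim := ENNReal.Tendsto.const_mul (a := (T : ℝ≥0∞))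
    ((hD _ hrΩ (isCompact_closedBall x r)).add hwA') (Or.inr ENNReal.coe_ne_top)
  rw [add_zero, mul_zero] at hlim
  exact tendsto_of_tendsto_of_tendsto_of_le_of_le tendsto_const_nhds hlim (fun _ ↦ zero_le)
    fun k ↦ (lintegral_mono_set Metric.ball_subset_closedBall).trans (hT (w k) (hw k) (c k))

theorem HasLocalEnergyBound.exists_tendsto_setLIntegral_sub (h : HasLocalEnergyBound μ Ω p w ε)
    (hΩ : IsOpen Ω) (hΩc : IsPreconnected Ω) (hp : 1 ≤ p) (hw : ∀ k, ContDiff ℝ 1 (w k))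
    (hε : Tendsto ε l (𝓝 0)) (hA : IsOpen A) (hΩA : (Ω ∩ A).Nonempty)
    (hwA : ∃ S : ℝ≥0, ∀ᶠ k in l, ∫⁻ x in A, ‖w k x‖ₑ ^ p ∂μ ≤ S) :
    ∃ c : ι → F, (∀ k, c k ∈ w k '' Ω) ∧ ∀ K ⊆ Ω, IsCompact K →
      Tendsto (fun k ↦ ∫⁻ x in K, ‖w k x - c k‖ₑ ^ p ∂μ) l (𝓝 0) := by
  have hD : ∀ K ⊆ Ω, IsCompact K →
      Tendsto (fun k ↦ ∫⁻ x in K, ‖fderiv ℝ (w k) x‖ₑ ^ p ∂μ) l (𝓝 0) := fun K hKΩ hK ↦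
    h.tendsto_setLIntegral_fderiv hΩ hΩc hp hw hε hA hΩA hwA hK hKΩ
  obtain ⟨x, hx, -⟩ := hΩA
  obtain ⟨r, hr, hrΩ⟩ :=
    Metric.nhds_basis_closedBall.mem_iff.1 (hΩ.mem_nhds hx)
  obtain ⟨T, hT⟩ := exists_mem_setLIntegral_enorm_sub_rpow_le (F := F) (μ := μ) hp
    measurableSet_closedBall (convex_closedBall x r) Metric.isBounded_closedBall
    (Metric.measure_closedBall_pos μ x hr).ne'
  choose y hy hle using fun k ↦ hT (w k) (hw k)
  have hlim := ENNReal.Tendsto.const_mul (a := (T : ℝ≥0∞))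
    (hD _ hrΩ (isCompact_closedBall x r)) (Or.inr ENNReal.coe_ne_top)
  rw [mul_zero] at hlim
  refine ⟨fun k ↦ w k (y k), fun k ↦ ⟨y k, hrΩ (hy k), rfl⟩, fun K hKΩ hK ↦ ?_⟩
  exact tendsto_setLIntegral_sub_of_tendsto_fderiv hΩ hΩc hp hw hD Metric.isOpen_ball
    ⟨x, hx, Metric.mem_ball_self hr⟩ (tendsto_of_tendsto_of_tendsto_of_le_of_le
      tendsto_const_nhds hlim (fun _ ↦ zero_le) fun k ↦
        (lintegral_mono_set Metric.ball_subset_closedBall).trans (hle k)) hKΩ hK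

end LocalConvergence

section LocalEnergy

open scoped ENNReal NNReal

variable {d : ℕ} {Ω K : Set (Euc d)} {p : ℝ} {V v : Euc d → ℝ}

theorem exists_norm_fderiv_div_rpow_le (hΩ : IsOpen Ω) (hp : 1 < p) (hv : ContDiffOn ℝ 1 v Ω)
    (hv0 : ∀ x ∈ Ω, 0 < v x) (hK : IsCompact K) (hKΩ : K ⊆ Ω) {δ : ℝ} (hδ : 0 < δ) :
    ∃ C, 0 ≤ C ∧ ∀ u, IsTestFun Ω u → (∀ x, 0 ≤ u x) → ∀ x ∈ K,
      ‖fderiv ℝ (fun y ↦ u y / v y) x‖ ^ p ≤ δ * ‖u x / v x‖ ^ p + C * piconeL p u v x := by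
  obtain ⟨m, hm, hmv⟩ := hK.exists_forall_le' (hv.continuousOn.mono hKΩ) fun x hx ↦ hv0 x (hKΩ hx)
  obtain ⟨M, hM, hvM⟩ := ((hK.image_of_continuousOn
    ((continuousOn_gradient hv hΩ).mono hKΩ)).isBounded).exists_pos_norm_le
  obtain ⟨C, hC, hbound⟩ := exists_norm_rpow_le_add_pBregman (E := Euc d) hp hm hM hδ
  refine ⟨C, hC, fun u hu hu0 x hx ↦ ?_⟩
  have hquot := gradient_eq_div_smul_add_smul_gradient_div hΩ (fun y hy ↦ (hv0 y hy).ne')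
    (hKΩ hx) ((hv.contDiffAt (hΩ.mem_nhds (hKΩ hx))).differentiableAt one_ne_zero)
    ((hu.isC1TestFun_div hΩ hv hv0).contDiff.differentiable one_ne_zero x)
  rw [piconeL_eq_pBregman hp (div_nonneg (hu0 x) (hv0 x (hKΩ hx)).le), hquot, ← norm_gradient]
  exact hbound (v x) (u x / v x) _ _ (hmv x hx) (hvM _ (Set.mem_image_of_mem _ hx))

theorem IsPositiveSupersolution.setLIntegral_piconeL_le (hv : IsPositiveSupersolution Ω V p v)
    (hΩ : IsOpen Ω) (hp : 1 < p) (hV : LocBddPotential Ω V) {u : Euc d → ℝ}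
    (hu : IsTestFun Ω u) (hu0 : ∀ x, 0 ≤ u x) (hKΩ : K ⊆ Ω) :
    ∫⁻ x in K, ENNReal.ofReal (piconeL p u v x) ≤ ENNReal.ofReal (energyQ Ω V p u) := by
  obtain ⟨hint, hle⟩ := hv.setIntegral_piconeL_le_energyQ hΩ hp hV hu hu0
  have hnonneg : ∀ᵐ x ∂volume.restrict Ω, 0 ≤ piconeL p u v x :=
    ae_restrict_of_forall_mem hΩ.measurableSet fun x hx ↦
      piconeL_nonneg hp (div_nonneg (hu0 x) (hv.2.1 x hx).le)
  calc ∫⁻ x in K, ENNReal.ofReal (piconeL p u v x)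
      ≤ ∫⁻ x in Ω, ENNReal.ofReal (piconeL p u v x) := lintegral_mono_set hKΩ
    _ = ENNReal.ofReal (∫ x in Ω, piconeL p u v x) :=
        (ofReal_integral_eq_lintegral_ofReal hint hnonneg).symm
    _ ≤ ENNReal.ofReal (energyQ Ω V p u) := ENNReal.ofReal_le_ofReal hle

theorem IsPositiveSupersolution.hasLocalEnergyBound {ι : Type*} {u : ι → Euc d → ℝ}
    (hv : IsPositiveSupersolution Ω V p v) (hΩ : IsOpen Ω) (hp : 1 < p)
    (hV : LocBddPotential Ω V) (hu : ∀ k, IsTestFun Ω (u k)) (hu0 : ∀ k x, 0 ≤ u k x) :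
    HasLocalEnergyBound volume Ω p (fun k x ↦ u k x / v x)
      fun k ↦ ENNReal.ofReal (energyQ Ω V p (u k)) := by
  intro K hKΩ hK δ hδ
  obtain ⟨C, hC, hbound⟩ := exists_norm_fderiv_div_rpow_le hΩ hp hv.1 hv.2.1 hK hKΩ
    (NNReal.coe_pos.2 hδ)
  refine ⟨C.toNNReal, fun k ↦ ?_⟩
  have henorm {F : Type} [NormedAddCommGroup F] (y : F) :
      ‖y‖ₑ ^ p = ENNReal.ofReal (‖y‖ ^ p) := by
    rw [← ofReal_norm, ENNReal.ofReal_rpow_of_nonneg (norm_nonneg _) (by linarith)]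
  have hw := ((hu k).isC1TestFun_div hΩ hv.1 hv.2.1).contDiff.continuous
  calc ∫⁻ x in K, ‖fderiv ℝ (fun y ↦ u k y / v y) x‖ₑ ^ p
      ≤ ∫⁻ x in K, (δ * ‖u k x / v x‖ₑ ^ p +
          ENNReal.ofReal C * ENNReal.ofReal (piconeL p (u k) v x)) := by
        refine setLIntegral_mono' hK.measurableSet fun x hx ↦ ?_
        rw [henorm, henorm, ← ENNReal.ofReal_coe_nnreal, ← ENNReal.ofReal_mul δ.coe_nonneg,
          ← ENNReal.ofReal_mul hC]
        exact (ENNReal.ofReal_le_ofReal (hbound _ (hu k) (hu0 k) x hx)).trans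
          ENNReal.ofReal_add_le
    _ = δ * (∫⁻ x in K, ‖u k x / v x‖ₑ ^ p) +
          ENNReal.ofReal C * ∫⁻ x in K, ENNReal.ofReal (piconeL p (u k) v x) := by
        have hmeas : Measurable fun x ↦ ‖u k x / v x‖ₑ ^ p :=
          hw.measurable.enorm.pow_const p
        rw [lintegral_add_left (hmeas.const_mul _), lintegral_const_mul _ hmeas,
          lintegral_const_mul' _ _ ENNReal.ofReal_ne_top]
    _ ≤ _ := by
        gcongr
        · exact le_rfl
        · exact hv.setLIntegral_piconeL_le hΩ hp hV (hu k) (hu0 k) hKΩ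

end LocalEnergy

section LpNorm

open scoped ENNReal NNReal

theorem memLp_restrict_of_isCompact {X F : Type*} [TopologicalSpace X] [T2Space X]
    [MeasurableSpace X] [OpensMeasurableSpace X] {μ : Measure X} [IsFiniteMeasureOnCompacts μ]
    [NormedAddCommGroup F] {K s : Set X} (hK : IsCompact K) (hsK : s ⊆ K) {f : X → F}
    (hf : ContinuousOn f K) (q : ℝ≥0∞) : MemLp f q (μ.restrict s) := by
  have : IsFiniteMeasure (μ.restrict K) := isFiniteMeasure_restrict.2 hK.measure_lt_top.ne
  obtain ⟨M, hM⟩ := hK.exists_bound_of_continuousOn hf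
  exact (MemLp.of_bound (hf.aestronglyMeasurable_of_isCompact hK hK.measurableSet) M
    (ae_restrict_of_forall_mem hK.measurableSet hM)).mono_measure (Measure.restrict_mono_set μ hsK)

variable {ι α F : Type*} {l : Filter ι} [MeasurableSpace α] {μ : Measure α}
  [NormedAddCommGroup F] {p : ℝ} {f : ι → α → F} {g : α → F}

theorem lpNorm_ofReal (hp : 0 < p) (hg : AEStronglyMeasurable g μ) :
    lpNorm g (ENNReal.ofReal p) μ = (∫ x, ‖g x‖ ^ p ∂μ) ^ (1 / p) := by
  rw [lpNorm_eq_integral_norm_rpow_toReal (ENNReal.ofReal_pos.2 hp).ne' ENNReal.ofReal_ne_top hg,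
    ENNReal.toReal_ofReal hp.le, one_div]

theorem lpNorm_restrict_ofReal_of_nonneg {f : α → ℝ} {s : Set α} (hp : 0 < p)
    (hs : MeasurableSet s) (hf : AEStronglyMeasurable f (μ.restrict s)) (hf0 : ∀ x ∈ s, 0 ≤ f x) :
    lpNorm f (ENNReal.ofReal p) (μ.restrict s) = (∫ x in s, f x ^ p ∂μ) ^ (1 / p) := by
  rw [lpNorm_ofReal hp hf]
  exact congrArg (· ^ (1 / p)) <| setIntegral_congr_fun hs fun x hx ↦ by
    simp only [Real.norm_of_nonneg (hf0 x hx)]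

theorem tendsto_lpNorm_of_tendsto_lintegral (hp : 0 < p)
    (hf : ∀ k, AEStronglyMeasurable (f k) μ)
    (h : Tendsto (fun k ↦ ∫⁻ x, ‖f k x‖ₑ ^ p ∂μ) l (𝓝 0)) :
    Tendsto (fun k ↦ lpNorm (f k) (ENNReal.ofReal p) μ) l (𝓝 0) := by
  have hroot := h.ennrpow_const (1 / p)
  rw [ENNReal.zero_rpow_of_pos (by positivity)] at hroot
  refine ((ENNReal.tendsto_toReal ENNReal.zero_ne_top).comp hroot).congr fun k ↦ ?_
  rw [Function.comp_apply, ← toReal_eLpNorm (hf k), eLpNorm_eq_lintegral_rpow_enorm_toReal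
    (ENNReal.ofReal_pos.2 hp).ne' ENNReal.ofReal_ne_top, ENNReal.toReal_ofReal hp.le]

theorem tendsto_integral_of_tendsto_lpNorm (hp : 0 < p)
    (hf : ∀ k, AEStronglyMeasurable (f k) μ)
    (h : Tendsto (fun k ↦ lpNorm (f k) (ENNReal.ofReal p) μ) l (𝓝 0)) :
    Tendsto (fun k ↦ ∫ x, ‖f k x‖ ^ p ∂μ) l (𝓝 0) := by
  have hpow := h.rpow_const (p := p) (Or.inr hp.le)
  rw [Real.zero_rpow hp.ne'] at hpow
  refine hpow.congr fun k ↦ ?_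
  rw [lpNorm_ofReal hp (hf k), ← Real.rpow_mul (integral_nonneg fun x ↦ by positivity),
    one_div_mul_cancel hp.ne', Real.rpow_one]

variable [NormedSpace ℝ F] {q : ℝ≥0∞} {c : ι → ℝ} {c₀ : ℝ}

theorem tendsto_lpNorm_sub_smul (hq : 1 ≤ q) (hf : ∀ k, MemLp (f k) q μ) (hg : MemLp g q μ)
    (h : Tendsto (fun k ↦ lpNorm (f k - c k • g) q μ) l (𝓝 0)) (hc : Tendsto c l (𝓝 c₀)) :
    Tendsto (fun k ↦ lpNorm (f k - c₀ • g) q μ) l (𝓝 0) := by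
  have hsum := h.add ((hc.sub_const c₀).norm.mul_const (lpNorm g q μ))
  rw [sub_self, norm_zero, zero_mul, add_zero] at hsum
  refine squeeze_zero (fun _ ↦ lpNorm_nonneg) (fun k ↦ ?_) hsum
  calc lpNorm (f k - c₀ • g) q μ
      ≤ lpNorm (f k - c k • g) q μ + lpNorm (c k • g - c₀ • g) q μ :=
        lpNorm_sub_le_lpNorm_sub_add_lpNorm_sub (hf k) (hg.const_smul _) hq
    _ = lpNorm (f k - c k • g) q μ + ‖c k - c₀‖ * lpNorm g q μ := by
        rw [← sub_smul, lpNorm_const_smul, coe_nnnorm]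

theorem tendsto_inv_lpNorm (hq : 1 ≤ q) (hf : ∀ k, MemLp (f k) q μ) (hg : MemLp g q μ)
    (hg0 : lpNorm g q μ ≠ 0) (hf1 : ∀ k, lpNorm (f k) q μ = 1) (hc : ∀ k, 0 ≤ c k)
    (h : Tendsto (fun k ↦ lpNorm (f k - c k • g) q μ) l (𝓝 0)) :
    Tendsto c l (𝓝 (lpNorm g q μ)⁻¹) := by
  have hle (k : ι) : dist (c k * lpNorm g q μ) 1 ≤ lpNorm (f k - c k • g) q μ := by
    have hnorm : lpNorm (c k • g) q μ = c k * lpNorm g q μ := by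
      rw [lpNorm_const_smul, coe_nnnorm, Real.norm_of_nonneg (hc k)]
    have hupper := lpNorm_le_lpNorm_add_lpNorm_sub (f := c k • g) (hf k) hq
    have hlower := lpNorm_le_lpNorm_add_lpNorm_sub' (f := f k) (hg.const_smul (c k)) hq
    rw [hnorm, hf1 k] at hupper hlower
    rw [Real.dist_eq, abs_le]
    constructor <;> linarith
  have hlim : Tendsto (fun k ↦ c k * lpNorm g q μ) l (𝓝 1) :=
    tendsto_iff_dist_tendsto_zero.2 (squeeze_zero (fun _ ↦ dist_nonneg) hle h)
  simpa only [mul_inv_cancel_right₀ hg0, one_mul] using hlim.mul_const (lpNorm g q μ)⁻¹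

end LpNorm

section NullSequences

open scoped ENNReal NNReal

theorem exists_setLIntegral_enorm_mul_rpow_le {X : Type*} [TopologicalSpace X]
    [MeasurableSpace X] {μ : Measure X} {K s : Set X} {g : X → ℝ} {p : ℝ} (hp : 0 ≤ p)
    (hK : IsCompact K) (hg : ContinuousOn g K) (hsK : s ⊆ K) (hs : MeasurableSet s) :
    ∃ M : ℝ≥0, ∀ f : X → ℝ,
      ∫⁻ x in s, ‖g x * f x‖ₑ ^ p ∂μ ≤ M * ∫⁻ x in s, ‖f x‖ₑ ^ p ∂μ := by
  obtain ⟨M, hM⟩ := (hK.image_of_continuousOn hg.nnnorm).bddAbove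
  refine ⟨M ^ p, fun f ↦ ?_⟩
  rw [← lintegral_const_mul' _ _ ENNReal.coe_ne_top]
  refine setLIntegral_mono' hs fun x hx ↦ ?_
  rw [ENNReal.coe_rpow_of_nonneg _ hp, ← ENNReal.mul_rpow_of_nonneg _ _ hp, enorm_mul]
  gcongr
  exact ENNReal.coe_le_coe.2 (hM (Set.mem_image_of_mem _ (hsK hx)))

variable {ι : Type*} {l : Filter ι} {d : ℕ} {Ω B K : Set (Euc d)} {p : ℝ} {V v : Euc d → ℝ}
  {u : ι → Euc d → ℝ}

theorem IsPositiveSupersolution.exists_tendsto_setLIntegral_sub_mul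
    (hv : IsPositiveSupersolution Ω V p v) (hΩ : IsOpen Ω) (hΩc : IsPreconnected Ω) (hp : 1 < p)
    (hV : LocBddPotential Ω V) (hu : ∀ k, IsTestFun Ω (u k)) (hu0 : ∀ k x, 0 ≤ u k x)
    (hE : Tendsto (fun k ↦ energyQ Ω V p (u k)) l (𝓝 0)) (hB : IsOpen B) (hBne : B.Nonempty)
    (hBc : IsCompact (closure B)) (hBΩ : closure B ⊆ Ω)
    (huB : ∃ S : ℝ≥0, ∀ᶠ k in l, ∫⁻ x in B, ‖u k x‖ₑ ^ p ≤ S) :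
    ∃ c : ι → ℝ, (∀ k, 0 ≤ c k) ∧ ∀ K ⊆ Ω, IsCompact K →
      Tendsto (fun k ↦ ∫⁻ x in K, ‖u k x - c k * v x‖ₑ ^ p) l (𝓝 0) := by
  have hp0 : 0 ≤ p := by linarith
  have hε : Tendsto (fun k ↦ ENNReal.ofReal (energyQ Ω V p (u k))) l (𝓝 0) := by
    simpa only [ENNReal.ofReal_zero] using ENNReal.tendsto_ofReal hE
  have hquotB : ∃ S : ℝ≥0, ∀ᶠ k in l, ∫⁻ x in B, ‖u k x / v x‖ₑ ^ p ≤ S := by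
    obtain ⟨S, hS⟩ := huB
    obtain ⟨M, hM⟩ := exists_setLIntegral_enorm_mul_rpow_le (μ := volume) hp0 hBc
      ((hv.1.continuousOn.mono hBΩ).inv₀ fun x hx ↦ (hv.2.1 x (hBΩ hx)).ne')
      subset_closure hB.measurableSet
    refine ⟨M * S, hS.mono fun k hk ↦ ?_⟩
    simp only [div_eq_inv_mul, ENNReal.coe_mul]
    exact (hM (u k)).trans (by gcongr)
  obtain ⟨c, hcmem, hc⟩ := (hv.hasLocalEnergyBound hΩ hp hV hu hu0).exists_tendsto_setLIntegral_sub
    hΩ hΩc hp.le (fun k ↦ ((hu k).isC1TestFun_div hΩ hv.1 hv.2.1).contDiff) hε hB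
    (hBne.mono fun x hx ↦ ⟨hBΩ (subset_closure hx), hx⟩) hquotB
  refine ⟨c, fun k ↦ ?_, fun K hKΩ hK ↦ ?_⟩
  · obtain ⟨x, hx, hxc⟩ := hcmem k
    exact hxc ▸ div_nonneg (hu0 k x) (hv.2.1 x hx).le
  · obtain ⟨M, hM⟩ := exists_setLIntegral_enorm_mul_rpow_le (μ := volume) hp0 hK
      (hv.1.continuousOn.mono hKΩ) subset_rfl hK.measurableSet
    have hlim := ENNReal.Tendsto.const_mul (hc K hKΩ hK) (Or.inr (ENNReal.coe_ne_top (r := M)))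
    rw [mul_zero] at hlim
    refine tendsto_of_tendsto_of_tendsto_of_le_of_le tendsto_const_nhds hlim (fun _ ↦ zero_le)
      fun k ↦ (setLIntegral_congr_fun hK.measurableSet fun x hx ↦ ?_).trans_le (hM _)
    have hvx := (hv.2.1 x (hKΩ hx)).ne'
    congr 2
    field_simp

theorem setLIntegral_enorm_rpow_eq_one {f : Euc d → ℝ} (hp : 0 ≤ p) (hf : ∀ x, 0 ≤ f x)
    (hfB : ∫ x in B, f x ^ p = 1) : ∫⁻ x in B, ‖f x‖ₑ ^ p = 1 := by
  have hint := ofReal_integral_eq_lintegral_ofReal (integrable_of_integral_eq_one hfB)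
    (ae_of_all _ fun x ↦ Real.rpow_nonneg (hf x) p)
  rw [hfB, ENNReal.ofReal_one] at hint
  rw [hint]
  refine lintegral_congr fun x ↦ ?_
  rw [← ofReal_norm, ENNReal.ofReal_rpow_of_nonneg (norm_nonneg _) hp,
    Real.norm_of_nonneg (hf x)]

theorem setIntegral_rpow_pos (hp : 0 ≤ p) (hB : IsOpen B) (hBne : B.Nonempty)
    (hBc : IsCompact (closure B)) (hv : ContinuousOn v (closure B)) (hv0 : ∀ x ∈ B, 0 < v x) :
    0 < ∫ x in B, v x ^ p := by
  have hpos : ∀ x ∈ B, 0 < v x ^ p := fun x hx ↦ Real.rpow_pos_of_pos (hv0 x hx) p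
  have hint : IntegrableOn (fun x ↦ v x ^ p) B :=
    ((hv.rpow_const fun _ _ ↦ Or.inr hp).integrableOn_compact hBc).mono_set subset_closure
  rw [setIntegral_pos_iff_support_of_nonneg_ae
    (ae_restrict_of_forall_mem hB.measurableSet fun x hx ↦ (hpos x hx).le) hint,
    Set.inter_eq_right.2 fun x hx ↦ Function.mem_support.2 (hpos x hx).ne']
  exact hB.measure_pos volume hBne

theorem IsTestFun.memLp {f : Euc d → ℝ} (hf : IsTestFun Ω f) (q : ℝ≥0∞) : MemLp f q :=
  hf.1.continuous.memLp_of_hasCompactSupport hf.2.1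

theorem IsPositiveSupersolution.memLp_restrict {s : Set (Euc d)}
    (hv : IsPositiveSupersolution Ω V p v) (hK : IsCompact K) (hKΩ : K ⊆ Ω) (hsK : s ⊆ K)
    (q : ℝ≥0∞) : MemLp v q (volume.restrict s) :=
  memLp_restrict_of_isCompact hK hsK (hv.1.continuousOn.mono hKΩ) q

theorem IsPositiveSupersolution.exists_tendsto_lpNorm_sub_smul
    (hv : IsPositiveSupersolution Ω V p v) (hΩ : IsOpen Ω) (hΩc : IsPreconnected Ω) (hp : 1 < p)
    (hV : LocBddPotential Ω V) (hu : ∀ k, IsTestFun Ω (u k)) (hu0 : ∀ k x, 0 ≤ u k x)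
    (hE : Tendsto (fun k ↦ energyQ Ω V p (u k)) l (𝓝 0)) (hB : IsOpen B) (hBne : B.Nonempty)
    (hBc : IsCompact (closure B)) (hBΩ : closure B ⊆ Ω)
    (huB : ∃ S : ℝ≥0, ∀ᶠ k in l, ∫⁻ x in B, ‖u k x‖ₑ ^ p ≤ S) :
    ∃ c : ι → ℝ, (∀ k, 0 ≤ c k) ∧ ∀ K ⊆ Ω, IsCompact K → ∀ s ⊆ K,
      Tendsto (fun k ↦ lpNorm (u k - c k • v) (ENNReal.ofReal p) (volume.restrict s)) l (𝓝 0) := by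
  obtain ⟨c, hc0, hc⟩ := hv.exists_tendsto_setLIntegral_sub_mul hΩ hΩc hp hV hu hu0 hE hB hBne hBc
    hBΩ huB
  refine ⟨c, hc0, fun K hKΩ hK s hsK ↦ tendsto_lpNorm_of_tendsto_lintegral (by linarith)
    (fun k ↦ ((hu k).1.continuous.aestronglyMeasurable).sub
      ((hv.memLp_restrict hK hKΩ hsK 1).1.const_smul _)) ?_⟩
  exact tendsto_of_tendsto_of_tendsto_of_le_of_le tendsto_const_nhds (hc K hKΩ hK)
    (fun _ ↦ zero_le) fun k ↦ lintegral_mono_set hsK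

theorem IsPositiveSupersolution.tendsto_setIntegral_abs_sub_rpow
    (hv : IsPositiveSupersolution Ω V p v) (hΩ : IsOpen Ω) (hΩc : IsPreconnected Ω) (hp : 1 < p)
    (hV : LocBddPotential Ω V) (hu : ∀ k, IsTestFun Ω (u k)) (hu0 : ∀ k x, 0 ≤ u k x)
    (hE : Tendsto (fun k ↦ energyQ Ω V p (u k)) l (𝓝 0)) (hB : IsOpen B) (hBne : B.Nonempty)
    (hBc : IsCompact (closure B)) (hBΩ : closure B ⊆ Ω) (huB : ∀ k, ∫ x in B, u k x ^ p = 1)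
    (hKΩ : K ⊆ Ω) (hK : IsCompact K) :
    Tendsto (fun k ↦ ∫ x in K, |u k x - (∫ y in B, v y ^ p) ^ (-(1 / p)) * v x| ^ p) l (𝓝 0) := by
  have hp0 : 0 < p := by linarith
  have hq : 1 ≤ ENNReal.ofReal p := ENNReal.one_le_ofReal.2 hp.le
  have hmemu (s : Set (Euc d)) (k : ι) : MemLp (u k) (ENNReal.ofReal p) (volume.restrict s) :=
    ((hu k).memLp _).restrict s
  have hmemvB := hv.memLp_restrict hBc hBΩ subset_closure (ENNReal.ofReal p)
  have hmemvK := hv.memLp_restrict hK hKΩ subset_rfl (ENNReal.ofReal p)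
  have hpos := setIntegral_rpow_pos hp0.le hB hBne hBc (hv.1.continuousOn.mono hBΩ)
    fun x hx ↦ hv.2.1 x (hBΩ (subset_closure hx))
  obtain ⟨c, hc0, hc⟩ := hv.exists_tendsto_lpNorm_sub_smul hΩ hΩc hp hV hu hu0 hE hB hBne hBc
    hBΩ ⟨1, .of_forall fun k ↦ (setLIntegral_enorm_rpow_eq_one hp0.le (hu0 k) (huB k)).le⟩
  have hnormu (k : ι) : lpNorm (u k) (ENNReal.ofReal p) (volume.restrict B) = 1 := by
    rw [lpNorm_restrict_ofReal_of_nonneg hp0 hB.measurableSet (hmemu B k).1 fun x _ ↦ hu0 k x,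
      huB k, Real.one_rpow]
  have hnormv : lpNorm v (ENNReal.ofReal p) (volume.restrict B) =
      (∫ x in B, v x ^ p) ^ (1 / p) :=
    lpNorm_restrict_ofReal_of_nonneg hp0 hB.measurableSet hmemvB.1
      fun x hx ↦ (hv.2.1 x (hBΩ (subset_closure hx))).le
  have hclim : Tendsto c l (𝓝 ((∫ x in B, v x ^ p) ^ (-(1 / p)))) := by
    rw [Real.rpow_neg hpos.le, ← hnormv]
    refine tendsto_inv_lpNorm hq (hmemu B) hmemvB ?_ hnormu hc0 (hc _ hBΩ hBc _ subset_closure)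
    rw [hnormv]
    exact (Real.rpow_pos_of_pos hpos _).ne'
  simpa only [Pi.sub_apply, Pi.smul_apply, smul_eq_mul, Real.norm_eq_abs] using
    tendsto_integral_of_tendsto_lpNorm hp0 (fun k ↦ ((hmemu K k).sub (hmemvK.const_smul _)).1)
      (tendsto_lpNorm_sub_smul hq (hmemu K) hmemvK (hc K hKΩ hK K subset_rfl) hclim)

end NullSequences

section SmoothAbs

/-- A smooth approximation of `|t|` from below that vanishes at `0`, so that composing with it
keeps compact supports. -/
def smoothAbs (ε t : ℝ) : ℝ := √(t ^ 2 + ε ^ 2) - ε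

variable {ε t : ℝ}

theorem smoothAbs_nonneg (ε t : ℝ) : 0 ≤ smoothAbs ε t :=
  sub_nonneg.2 (Real.le_sqrt_of_sq_le (le_add_of_nonneg_left (sq_nonneg t)))

theorem smoothAbs_le_abs (hε : 0 ≤ ε) (t : ℝ) : smoothAbs ε t ≤ |t| := by
  rw [smoothAbs, sub_le_iff_le_add, Real.sqrt_le_iff]
  refine ⟨by positivity, ?_⟩
  rw [add_sq, sq_abs]
  nlinarith [mul_nonneg (abs_nonneg t) hε]

theorem smoothAbs_zero_right (hε : 0 ≤ ε) : smoothAbs ε 0 = 0 :=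
  le_antisymm ((smoothAbs_le_abs hε 0).trans_eq abs_zero) (smoothAbs_nonneg ε 0)

theorem tendsto_smoothAbs (t : ℝ) : Tendsto (smoothAbs · t) (𝓝 0) (𝓝 |t|) := by
  have hcont : Continuous (smoothAbs · t) := by
    unfold smoothAbs
    fun_prop
  simpa [smoothAbs, Real.sqrt_sq_eq_abs] using hcont.tendsto 0

theorem contDiff_smoothAbs (hε : 0 < ε) {n : WithTop ℕ∞} : ContDiff ℝ n (smoothAbs ε) :=
  (((contDiff_id.pow 2).add contDiff_const).sqrt fun t ↦ (by positivity : t ^ 2 + ε ^ 2 ≠ 0)).sub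
    contDiff_const

theorem hasDerivAt_smoothAbs (hε : 0 < ε) (t : ℝ) :
    HasDerivAt (smoothAbs ε) (t / √(t ^ 2 + ε ^ 2)) t := by
  have h := (((hasDerivAt_pow 2 t).add_const (ε ^ 2)).sqrt
    (by positivity : t ^ 2 + ε ^ 2 ≠ 0)).sub_const ε
  refine h.congr_deriv ?_
  rw [Nat.cast_two, pow_one, mul_div_mul_left _ _ two_ne_zero]

theorem abs_div_sqrt_sq_add_sq_le_one (ε t : ℝ) : |t / √(t ^ 2 + ε ^ 2)| ≤ 1 := by
  rw [abs_div, abs_of_nonneg (Real.sqrt_nonneg _)]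
  exact div_le_one_of_le₀ (Real.abs_le_sqrt (le_add_of_nonneg_right (sq_nonneg ε)))
    (Real.sqrt_nonneg _)

end SmoothAbs

section NonnegativeMinimizers

variable {d : ℕ} {Ω B : Set (Euc d)} {p : ℝ} {V u : Euc d → ℝ}

theorem IsTestFun.comp_left {h : ℝ → ℝ} (hu : IsTestFun Ω u) (hh : ContDiff ℝ (⊤ : ℕ∞) h)
    (h0 : h 0 = 0) : IsTestFun Ω fun x ↦ h (u x) :=
  ⟨hh.comp hu.1, hu.2.1.comp_left h0, (tsupport_comp_subset h0 u).trans hu.2.2⟩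

theorem energyQ_const_mul (hu : Differentiable ℝ u) {c : ℝ} (hc : 0 ≤ c) :
    energyQ Ω V p (fun x ↦ c * u x) = c ^ p * energyQ Ω V p u := by
  rw [energyQ, energyQ, ← integral_const_mul]
  refine integral_congr_ae (ae_of_all _ fun x ↦ ?_)
  have hgrad : gradient (fun y ↦ c * u y) x = c • gradient u x :=
    gradient_comp (h := (c * ·)) (by simpa using (hasDerivAt_id (u x)).const_mul c) (hu x)
  simp only [hgrad, norm_smul, Real.norm_of_nonneg hc, abs_mul, abs_of_nonneg hc,
    Real.mul_rpow hc (norm_nonneg _), Real.mul_rpow hc (abs_nonneg _)]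
  ring

theorem IsTestFun.exists_setIntegral_rpow_eq_one (hu : IsTestFun Ω u) (hp : p ≠ 0)
    (hu0 : ∀ x, 0 ≤ u x) (hI : 0 < ∫ x in B, u x ^ p) :
    ∃ g, IsTestFun Ω g ∧ (∀ x, 0 ≤ g x) ∧ ∫ x in B, g x ^ p = 1 ∧
      energyQ Ω V p g = energyQ Ω V p u / ∫ x in B, u x ^ p := by
  set I := ∫ x in B, u x ^ p with hIdef
  have hc : 0 ≤ I ^ (-(1 / p)) := Real.rpow_nonneg hI.le _
  have hcp : (I ^ (-(1 / p))) ^ p = I⁻¹ := by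
    rw [← Real.rpow_mul hI.le, neg_mul, one_div_mul_cancel hp, Real.rpow_neg_one]
  refine ⟨fun x ↦ I ^ (-(1 / p)) * u x, hu.comp_left (contDiff_const.mul contDiff_id) (mul_zero _),
    fun x ↦ mul_nonneg hc (hu0 x), ?_, ?_⟩
  · simp only [Real.mul_rpow hc (hu0 _), hcp]
    rw [integral_const_mul, ← hIdef, inv_mul_cancel₀ hI.ne']
  · rw [energyQ_const_mul (hu.isC1TestFun.contDiff.differentiable one_ne_zero) hc, hcp,
      div_eq_inv_mul]

theorem exists_isTestFun_setIntegral_rpow_pos (hp : 0 < p) (hB : IsOpen B) (hBne : B.Nonempty)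
    (hBΩ : B ⊆ Ω) : ∃ f, IsTestFun Ω f ∧ (∀ x, 0 ≤ f x) ∧ 0 < ∫ x in B, f x ^ p := by
  obtain ⟨x, hx⟩ := hBne
  obtain ⟨f, hfs, hfc, hfd, hfr, hf1⟩ := exists_contDiff_tsupport_subset (n := ⊤) (hB.mem_nhds hx)
  have hf0 : ∀ y, 0 ≤ f y := fun y ↦ (hfr ⟨y, rfl⟩).1
  refine ⟨f, ⟨hfd, hfc, hfs.trans hBΩ⟩, hf0, ?_⟩
  rw [setIntegral_eq_integral_of_forall_compl_eq_zero fun y hy ↦ by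
    rw [image_eq_zero_of_notMem_tsupport fun h ↦ hy (hfs h), Real.zero_rpow hp.ne']]
  exact Continuous.integral_pos_of_hasCompactSupport_nonneg_nonzero (x := x)
    (hfd.continuous.rpow_const fun _ ↦ Or.inr hp.le)
    (hfc.comp_left (g := (· ^ p)) (Real.zero_rpow hp.ne')) (fun y ↦ Real.rpow_nonneg (hf0 y) p)
    (by simp only [hf1, Real.one_rpow, ne_eq, one_ne_zero, not_false_eq_true])

theorem IsTestFun.smoothAbs_comp {ε : ℝ} (hu : IsTestFun Ω u) (hε : 0 < ε) :
    IsTestFun Ω fun x ↦ smoothAbs ε (u x) :=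
  hu.comp_left (contDiff_smoothAbs hε) (smoothAbs_zero_right hε.le)

theorem norm_gradient_smoothAbs_le {ε : ℝ} (hε : 0 < ε) {x : Euc d}
    (hu : DifferentiableAt ℝ u x) :
    ‖gradient (fun y ↦ smoothAbs ε (u y)) x‖ ≤ ‖gradient u x‖ := by
  rw [gradient_comp (hasDerivAt_smoothAbs hε (u x)) hu, norm_smul]
  exact mul_le_of_le_one_left (norm_nonneg _) (abs_div_sqrt_sq_add_sq_le_one ε (u x))

theorem tendsto_integral_mul_smoothAbs_rpow {α : Type*} [MeasurableSpace α] {μ : Measure α}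
    {W f : α → ℝ} (hp : 0 ≤ p) (hW : AEStronglyMeasurable W μ) (hf : AEMeasurable f μ)
    (hint : Integrable (fun x ↦ W x * |f x| ^ p) μ) :
    Tendsto (fun ε ↦ ∫ x, W x * smoothAbs ε (f x) ^ p ∂μ) (𝓝[>] 0)
      (𝓝 (∫ x, W x * |f x| ^ p ∂μ)) := by
  refine tendsto_integral_filter_of_dominated_convergence (fun x ↦ ‖W x * |f x| ^ p‖)
    (.of_forall fun ε ↦ ?_) ?_ hint.norm (ae_of_all _ fun x ↦ ?_)
  · unfold smoothAbs
    exact hW.mul (((((hf.pow_const 2).add_const _).sqrt).sub_const _).pow_const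
      p).aestronglyMeasurable
  · filter_upwards [self_mem_nhdsWithin] with ε hε
    refine ae_of_all _ fun x ↦ ?_
    rw [norm_mul, norm_mul, Real.norm_of_nonneg (Real.rpow_nonneg (smoothAbs_nonneg _ _) p),
      Real.norm_of_nonneg (Real.rpow_nonneg (abs_nonneg _) p)]
    gcongr
    · exact smoothAbs_nonneg _ _
    · exact smoothAbs_le_abs (le_of_lt hε) _
  · exact (((tendsto_smoothAbs (f x)).mono_left nhdsWithin_le_nhds).rpow_const
      (Or.inr hp)).const_mul _

theorem energyQ_smoothAbs_le (hV : LocBddPotential Ω V) (hΩ : IsOpen Ω) (hp : 0 < p)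
    (hu : IsTestFun Ω u) {ε : ℝ} (hε : 0 < ε) :
    energyQ Ω V p (fun x ↦ smoothAbs ε (u x)) ≤
      (∫ x in Ω, ‖gradient u x‖ ^ p) + ∫ x in Ω, V x * smoothAbs ε (u x) ^ p := by
  have hs := (hu.smoothAbs_comp hε).isC1TestFun
  have hgrad := (hs.integrable_norm_gradient_rpow hp).integrableOn (s := Ω)
  have hpot := hV.integrableOn_mul_abs_rpow hΩ hp hs
  rw [energyQ, integral_add hgrad hpot]
  simp only [abs_of_nonneg (smoothAbs_nonneg ε _)]
  gcongr ?_ + _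
  refine setIntegral_mono hgrad (hu.isC1TestFun.integrable_norm_gradient_rpow hp).integrableOn
    fun x ↦ ?_
  exact Real.rpow_le_rpow (norm_nonneg _) (norm_gradient_smoothAbs_le hε
    (hu.isC1TestFun.contDiff.differentiable one_ne_zero x)) hp.le

theorem IsTestFun.exists_nonneg_energyQ_lt (hu : IsTestFun Ω u) (hΩ : IsOpen Ω) (hp : 0 < p)
    (hV : LocBddPotential Ω V) (huB : ∫ x in B, |u x| ^ p = 1) {q : ℝ}
    (hq : energyQ Ω V p u < q) :
    ∃ g, IsTestFun Ω g ∧ (∀ x, 0 ≤ g x) ∧ ∫ x in B, g x ^ p = 1 ∧ energyQ Ω V p g < q := by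
  have hu1 := hu.isC1TestFun
  have hgrad := (hu1.integrable_norm_gradient_rpow hp).integrableOn (s := Ω)
  have hpot := hV.integrableOn_mul_abs_rpow hΩ hp hu1
  have hmass : Tendsto (fun ε ↦ ∫ x in B, smoothAbs ε (u x) ^ p) (𝓝[>] 0) (𝓝 1) := by
    have h := tendsto_integral_mul_smoothAbs_rpow (μ := volume.restrict B) (W := fun _ ↦ 1) hp.le
      aestronglyMeasurable_const hu.1.continuous.aemeasurable
      (by simpa only [one_mul] using integrable_of_integral_eq_one huB)
    simpa only [one_mul, huB] using h
  have hRayleigh : Tendsto (fun ε ↦ ((∫ x in Ω, ‖gradient u x‖ ^ p) +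
      ∫ x in Ω, V x * smoothAbs ε (u x) ^ p) / ∫ x in B, smoothAbs ε (u x) ^ p)
      (𝓝[>] 0) (𝓝 (energyQ Ω V p u)) := by
    rw [energyQ, integral_add hgrad hpot, ← div_one (_ + _)]
    exact ((tendsto_integral_mul_smoothAbs_rpow hp.le hV.1.aestronglyMeasurable
      hu.1.continuous.aemeasurable hpot).const_add _).div hmass one_ne_zero
  obtain ⟨ε, hεq, hεB, hε⟩ := ((hRayleigh.eventually_lt_const hq).and
    ((hmass.eventually_const_lt one_pos).and self_mem_nhdsWithin)).exists
  obtain ⟨g, hg, hg0, hgB, hgQ⟩ := (hu.smoothAbs_comp hε).exists_setIntegral_rpow_eq_one (V := V)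
    hp.ne' (fun x ↦ smoothAbs_nonneg ε (u x)) hεB
  refine ⟨g, hg, hg0, hgB, hgQ.trans_lt (lt_of_le_of_lt ?_ hεq)⟩
  gcongr
  exact energyQ_smoothAbs_le hV hΩ hp hu hε

theorem exists_nonneg_energyQ_lt_of_cB_lt (hΩ : IsOpen Ω) (hp : 0 < p)
    (hV : LocBddPotential Ω V) (hB : IsOpen B) (hBne : B.Nonempty) (hBΩ : B ⊆ Ω) {q : ℝ}
    (hq : cB Ω B V p < q) :
    ∃ g, IsTestFun Ω g ∧ (∀ x, 0 ≤ g x) ∧ ∫ x in B, g x ^ p = 1 ∧ energyQ Ω V p g < q := by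
  obtain ⟨f, hf, hf0, hfB⟩ := exists_isTestFun_setIntegral_rpow_pos hp hB hBne hBΩ
  obtain ⟨g, hg, hg0, hgB, -⟩ := hf.exists_setIntegral_rpow_eq_one (V := V) hp.ne' hf0 hfB
  have hne : {q | ∃ u, IsTestFun Ω u ∧ ∫ x in B, |u x| ^ p = 1 ∧ q = energyQ Ω V p u}.Nonempty :=
    ⟨_, g, hg, by simpa only [abs_of_nonneg (hg0 _)] using hgB, rfl⟩
  obtain ⟨-, ⟨u, hu, huB, rfl⟩, huq⟩ := exists_lt_of_csInf_lt hne hq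
  exact hu.exists_nonneg_energyQ_lt hΩ hp hV huB huq

theorem IsPositiveSupersolution.exists_nonneg_tendsto_energyQ {v : Euc d → ℝ}
    (hv : IsPositiveSupersolution Ω V p v) (hΩ : IsOpen Ω) (hp : 1 < p)
    (hV : LocBddPotential Ω V) (hB : IsOpen B) (hBne : B.Nonempty) (hBΩ : B ⊆ Ω)
    (hcB : cB Ω B V p ≤ 0) :
    ∃ u : ℕ → Euc d → ℝ, (∀ k, IsTestFun Ω (u k)) ∧ (∀ k x, 0 ≤ u k x) ∧
      (∀ k, ∫ x in B, u k x ^ p = 1) ∧ Tendsto (fun k ↦ energyQ Ω V p (u k)) atTop (𝓝 0) := by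
  choose u hu hu0 huB huE using fun k : ℕ ↦
    exists_nonneg_energyQ_lt_of_cB_lt hΩ (by linarith) hV hB hBne hBΩ
      (hcB.trans_lt (Nat.one_div_pos_of_nat (n := k) (α := ℝ)))
  exact ⟨u, hu, hu0, huB, squeeze_zero (fun k ↦ hv.energyQ_nonneg hΩ hp hV (hu k) (hu0 k))
    (fun k ↦ (huE k).le) tendsto_one_div_add_atTop_nhds_zero_nat⟩

end NonnegativeMinimizers

theorem null_sequence_tendsto_groundState_general {d : ℕ} (Ω : Set (Euc d)) (hΩo : IsOpen Ω)
    (hΩc : IsPreconnected Ω) {p : ℝ} (hp₁ : 1 < p) (V : Euc d → ℝ) (hV : LocBddPotential Ω V)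
    (v : Euc d → ℝ) (hv : IsPositiveSupersolution Ω V p v)
    (B : Set (Euc d)) (hBo : IsOpen B) (hBne : B.Nonempty)
    (hBc : IsCompact (closure B)) (hBΩ : closure B ⊆ Ω) (hcB : cB Ω B V p = 0) :
    (∀ u : ℕ → Euc d → ℝ, (∀ k, IsTestFun Ω (u k)) → (∀ k x, 0 ≤ u k x) →
        (∀ k, ∫ x in B, u k x ^ p = 1) →
        Tendsto (fun k ↦ energyQ Ω V p (u k)) atTop (𝓝 0) →
        ∀ K : Set (Euc d), K ⊆ Ω → IsCompact K →
          Tendsto (fun k ↦ ∫ x in K, |u k x - (∫ y in B, v y ^ p) ^ (-(1 / p)) * v x| ^ p)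
            atTop (𝓝 0)) ∧
      ∃ w : Euc d → ℝ, IsGroundState Ω V p w := by
  have hconv (u : ℕ → Euc d → ℝ) hu hu0 huB huE K hKΩ hK :=
    hv.tendsto_setIntegral_abs_sub_rpow (u := u) (l := atTop) (K := K) hΩo hΩc hp₁ hV hu hu0 huE
      hBo hBne hBc hBΩ huB hKΩ hK
  have hmass : 0 < ∫ y in B, v y ^ p :=
    setIntegral_rpow_pos (by linarith) hBo hBne hBc (hv.1.continuousOn.mono hBΩ)
      fun x hx ↦ hv.2.1 x (hBΩ (subset_closure hx))
  obtain ⟨u, hu, hu0, huB, huE⟩ :=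
    hv.exists_nonneg_tendsto_energyQ hΩo hp₁ hV hBo hBne (subset_closure.trans hBΩ) hcB.le
  exact ⟨hconv, _, contDiffOn_const.mul hv.1,
    fun x hx ↦ mul_pos (Real.rpow_pos_of_pos hmass _) (hv.2.1 x hx),
    u, ⟨hu, hu0, B, hBo, hBc, hBΩ, huB, huE⟩, hconv u hu hu0 huB huE⟩

/-- If `Q ≥ 0`, `v` is a positive supersolution of `Q'(u)=0` in `Ω` and `c_B = 0`
for some nonempty open `B ⋐ Ω`, then every sequence of nonnegative test functions
normalized in `L^p(B)` whose energies tend to `0` converges in `L^p_loc(Ω)` to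
`c v` with `c = (∫_B v^p)^{-1/p}`; in particular `Q` admits a ground state. -/
theorem null_sequence_tendsto_groundState {d : ℕ} (hd : 2 ≤ d)
    (Ω : Set (Euc d)) (hΩo : IsOpen Ω) (hΩc : IsConnected Ω)
    {p : ℝ} (hp₁ : 1 < p) (V : Euc d → ℝ) (hV : LocBddPotential Ω V)
    (hQ : ∀ u : Euc d → ℝ, IsTestFun Ω u → 0 ≤ energyQ Ω V p u)
    (v : Euc d → ℝ) (hv : IsPositiveSupersolution Ω V p v)
    (B : Set (Euc d)) (hBo : IsOpen B) (hBne : B.Nonempty)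
    (hBc : IsCompact (closure B)) (hBΩ : closure B ⊆ Ω)
    (hcB : cB Ω B V p = 0) :
    (∀ u : ℕ → Euc d → ℝ, (∀ k, IsTestFun Ω (u k)) → (∀ k x, 0 ≤ u k x) →
        (∀ k, (∫ x in B, u k x ^ p) = 1) →
        Tendsto (fun k => energyQ Ω V p (u k)) atTop (𝓝 0) →
        ∀ K : Set (Euc d), K ⊆ Ω → IsCompact K →
          Tendsto
            (fun k => ∫ x in K,
              |u k x - (∫ y in B, v y ^ p) ^ (-(1 / p)) * v x| ^ p)
            atTop (𝓝 0)) ∧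
      ∃ w : Euc d → ℝ, IsGroundState Ω V p w := by
  exact null_sequence_tendsto_groundState_general Ω hΩo hΩc.isPreconnected hp₁ V hV v hv B hBo hBne
    hBc hBΩ hcB
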